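/- For all integers 0 < d < n and every real τ with 0 < τ < 10⁻¹, there exists ε > 0 (depending only on n, d, τ) with the following property. Let E ⊆ B(0,1) ⊆ ℝ^n be a closed set containing the origin, and suppose that for every x ∈ E and every 0 < r ≤ 10 there is a d-dimensional affine plane P(x,r) containing x such that: dist(y,P(x,r)) ≤ εr for all y ∈ E ∩ B(x,r); d_{x,10^{-k}}(P(x,10^{-k}), P(x,10^{-k+1})) ≤ ε for all x ∈ E and all integers k ≥ 0; and d_{x,10^{-k+2}}(P(x,10^{-k}), P(y,10^{-k})) ≤ ε whenever k ≥ 0 and x, y ∈ E satisfy |x−y| ≤ 10^{-k+2}. Then there is a bijective map g : ℝ^n → ℝ^n such that |g(x) − x| ≤ τ for all x ∈ ℝ^n, (1/4)|x−y|^{1+τ} ≤ |g(x) − g(y)| ≤ 3|x−y|^{1−τ} for all x, y ∈ ℝ^n with |x−y| ≤ 1, and E ⊆ g(P(0,10)). Moreover Σ = g(P(0,10)) is Reifenberg-flat: there is a constant C, depending only on n and d, such that for every x ∈ Σ and r > 0 there is a d-dimensional affine plane Q(x,r) through x with d_{x,r}(Σ, Q(x,r)) ≤ Cε. (Theorem 1.10.)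 -/

import Mathlib

open Metric Set

noncomputable section

/-- `ℝⁿ`. -/
abbrev V (n : ℕ) := EuclideanSpace ℝ (Fin n)

/-- `P` is a `d`-dimensional affine plane of `ℝⁿ`. -/
def IsAffinePlane (n d : ℕ) (P : Set (V n)) : Prop :=
  ∃ Q : AffineSubspace ℝ (V n), (Q : Set (V n)) = P ∧
    Module.finrank ℝ Q.direction = d ∧ (Q : Set (V n)).Nonempty

/-- The normalized local Hausdorff distance `d_{x,r}(A,B)`. -/
def nhd {n : ℕ} (x : V n) (r : ℝ) (A B : Set (V n)) : ℝ :=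
  r⁻¹ * max (⨆ y ∈ A ∩ ball x r, infDist y B) (⨆ y ∈ B ∩ ball x r, infDist y A)

/-! Encode a plane by the projection onto its direction. At scale `10⁻ᵏ`, a Lipschitz partition of
unity over a maximal separated subset of `E` averages the displacements that flatten a set onto the
planes `P(x, 10⁻ᵏ)`; coherence makes the averaged map a perturbation of the identity by a small
multiple of the scale, and keeps the image of `P(0, 10)` a local Lipschitz graph with small
constant. The composition of the first `k` maps changes logarithms of distances by at most `O(ε)`
per scale, so the limit is bi-Hölder with exponents close to `1`, and at scale `10⁻ᵏ` its image
inherits flatness from the `k`-th composition. -/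

section SeparatedSets

theorem packingNumber_ne_top_of_totallyBounded {X : Type*} [PseudoEMetricSpace X] {s : Set X}
    {ε : NNReal} (hε : ε ≠ 0) (hs : TotallyBounded s) : packingNumber ε s ≠ ⊤ := by
  obtain ⟨N, -, hfin, hN⟩ := exists_finite_isCover_of_totallyBounded (half_pos hε.bot_lt).ne' hs
  have hle := (packingNumber_two_mul_le_externalCoveringNumber (ε / 2) s).trans
    hN.externalCoveringNumber_le_encard
  rw [mul_div_cancel₀ ε two_ne_zero] at hle
  exact ne_top_of_le_ne_top (encard_ne_top_iff.2 hfin) hle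

theorem exists_finset_isSeparated_isCover {X : Type*} [PseudoEMetricSpace X] {s : Set X}
    {ε : NNReal} (hε : ε ≠ 0) (hs : TotallyBounded s) :
    ∃ N : Finset X, ↑N ⊆ s ∧ IsSeparated ε (N : Set X) ∧ IsCover ε s N := by
  have hfin := packingNumber_ne_top_of_totallyBounded hε hs
  have hN : (maximalSeparatedSet ε s).Finite :=
    encard_ne_top_iff.1 ((encard_maximalSeparatedSet hfin).trans_ne hfin)
  exact ⟨hN.toFinset, by simpa using maximalSeparatedSet_subset,
    by simpa using isSeparated_maximalSeparatedSet, by simpa using isCover_maximalSeparatedSet hfin⟩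

theorem exists_card_le_of_isSeparated (X : Type*) [NormedAddCommGroup X] [NormedSpace ℝ X]
    [FiniteDimensional ℝ X] (R : ℝ) :
    ∃ M : ℕ, ∀ (r : NNReal) (y : X) (J : Finset X), r ≠ 0 → ↑J ⊆ closedBall y (R * r) →
      IsSeparated r (J : Set X) → J.card ≤ M := by
  have : ProperSpace X := FiniteDimensional.proper_real X
  have hfin : packingNumber 1 (closedBall (0 : X) R) ≠ ⊤ :=
    packingNumber_ne_top_of_totallyBounded one_ne_zero (isCompact_closedBall 0 R).totallyBounded
  refine ⟨(packingNumber 1 (closedBall (0 : X) R)).toNat, fun r y J hr hJ hsep => ?_⟩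
  let T : X → X := fun z => (r : ℝ)⁻¹ • (z - y)
  have hT : ∀ z z', dist (T z) (T z') = (r : ℝ)⁻¹ * dist z z' := fun z z' => by
    simp [T, dist_smul₀]
  have hr0 : 0 < (r : ℝ) := hr.bot_lt
  have hsub : T '' J ⊆ closedBall 0 R := by
    rintro _ ⟨z, hz, rfl⟩
    have hTy : T y = 0 := by simp [T]
    rw [mem_closedBall, ← hTy, hT, inv_mul_le_iff₀ hr0, mul_comm]
    exact hJ hz
  have hsepT : IsSeparated (1 : NNReal) (T '' J) := by
    rintro _ ⟨z, hz, rfl⟩ _ ⟨z', hz', rfl⟩ hne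
    have hzz := hsep hz hz' (fun h => hne (by rw [h]))
    simp only [edist_nndist, ENNReal.coe_lt_coe, ← NNReal.coe_lt_coe, coe_nndist] at hzz ⊢
    rwa [hT, lt_inv_mul_iff₀ hr0, NNReal.coe_one, mul_one]
  have hinj : InjOn T J := fun z _ z' _ h => by simpa [T, hr] using h
  rw [← Nat.cast_le (α := ℕ∞), ENat.natCast_toNat hfin, ← encard_coe_eq_coe_finsetCard,
    ← hinj.encard_image]
  exact hsepT.encard_le_packingNumber hsub

end SeparatedSets

section LipschitzPartition

theorem sum_abs_div_max_one_sub_le {ι : Type*} (N : Finset ι) {a b : ι → ℝ} (hb : ∀ j, 0 ≤ b j) :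
    ∑ j ∈ N, |a j / max 1 (∑ i ∈ N, a i) - b j / max 1 (∑ i ∈ N, b i)| ≤
      2 * ∑ j ∈ N, |a j - b j| := by
  set m := max 1 (∑ i ∈ N, a i)
  set m' := max 1 (∑ i ∈ N, b i)
  have hm : 1 ≤ m := le_max_left _ _
  have hm' : 0 < m' := one_pos.trans_le (le_max_left _ _)
  have hmm : |m' - m| ≤ ∑ j ∈ N, |a j - b j| := by
    refine (abs_max_sub_max_le_max _ _ _ _).trans ?_
    rw [sub_self, abs_zero, max_eq_right (abs_nonneg _), abs_sub_comm, ← Finset.sum_sub_distrib]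
    exact Finset.abs_sum_le_sum_abs _ _
  have hterm : ∀ j, |a j / m - b j / m'| ≤ |a j - b j| + b j / m' * |m' - m| := fun j => by
    have hsplit : a j / m - b j / m' = ((a j - b j) + b j / m' * (m' - m)) / m := by
      field_simp
      ring
    rw [hsplit, abs_div, abs_of_pos (one_pos.trans_le hm)]
    refine (div_le_self (abs_nonneg _) hm).trans ((abs_add_le _ _).trans_eq ?_)
    rw [abs_mul, abs_of_nonneg (div_nonneg (hb j) hm'.le)]
  calc ∑ j ∈ N, |a j / m - b j / m'|
      ≤ ∑ j ∈ N, (|a j - b j| + b j / m' * |m' - m|) := Finset.sum_le_sum fun j _ => hterm j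
    _ = ∑ j ∈ N, |a j - b j| + (∑ j ∈ N, b j) / m' * |m' - m| := by
        rw [Finset.sum_add_distrib, ← Finset.sum_mul, Finset.sum_div]
    _ ≤ ∑ j ∈ N, |a j - b j| + 1 * ∑ j ∈ N, |a j - b j| := by
        gcongr
        exact (div_le_one hm').2 (le_max_right _ _)
    _ = 2 * ∑ j ∈ N, |a j - b j| := by ring

/-- The tent function at scale `r` with apex `j`, supported in the ball `B(j, 12 r)`. -/
def tent {X : Type*} [PseudoMetricSpace X] (r : ℝ) (j y : X) : ℝ := max 0 (12 - dist y j / r)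

section Tent

variable {X : Type*} [PseudoMetricSpace X] {r : ℝ} {j y : X}

theorem tent_nonneg (r : ℝ) (j y : X) : 0 ≤ tent r j y := le_max_left _ _

theorem tent_eq_zero (hr : 0 < r) (h : 12 * r ≤ dist y j) : tent r j y = 0 :=
  max_eq_left (sub_nonpos.2 ((le_div_iff₀ hr).2 h))

theorem one_le_tent (hr : 0 < r) (h : dist y j ≤ 11 * r) : 1 ≤ tent r j y := by
  have : dist y j / r ≤ 11 := (div_le_iff₀ hr).2 h
  exact le_max_of_le_right (by linarith)

theorem abs_tent_sub_tent_le (hr : 0 < r) (j y y' : X) :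
    |tent r j y - tent r j y'| ≤ dist y y' / r := by
  refine (abs_max_sub_max_le_max _ _ _ _).trans ?_
  rw [sub_self, abs_zero, max_eq_right (abs_nonneg _), sub_sub_sub_cancel_left, ← sub_div, abs_div,
    abs_of_pos hr, dist_comm y y']
  gcongr
  exact abs_dist_sub_le y' y j

theorem sum_abs_tent_sub_tent_le (hr : 0 < r) {N : Finset X} {M : ℕ}
    (hM : ∀ y, (N.filter fun j => dist y j < 12 * r).card ≤ M) (y y' : X) :
    ∑ j ∈ N, |tent r j y - tent r j y'| ≤ 2 * M * (dist y y' / r) := by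
  classical
  have hout : ∀ j ∈ N, tent r j y - tent r j y' ≠ 0 → dist y j < 12 * r ∨ dist y' j < 12 * r :=
    fun j _ hne => by
      by_contra! hfar
      exact hne (by rw [tent_eq_zero hr hfar.1, tent_eq_zero hr hfar.2, sub_self])
  rw [← Finset.sum_filter_of_ne fun j hj hne => hout j hj (abs_ne_zero.1 hne)]
  refine (Finset.sum_le_card_nsmul _ _ _ fun j _ => abs_tent_sub_tent_le hr j y y').trans ?_
  rw [nsmul_eq_mul]
  gcongr
  rw [Finset.filter_or, two_mul]
  exact_mod_cast (Finset.card_union_le _ _).trans (add_le_add (hM y) (hM y'))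

end Tent

/-- The functions `θ j`, for `j ∈ N`, form a partition of unity of the `10 r`-neighbourhood of `E`
at scale `r`: they are supported in balls of radius `12 r` about points of `E`, and are `K / r`
Lipschitz in the strong, summed sense. -/
structure IsLipschitzPartition {X : Type*} [PseudoMetricSpace X] (E : Set X) (r K : ℝ)
    (N : Finset X) (θ : X → X → ℝ) : Prop where
  subset : ↑N ⊆ E
  nonneg : ∀ j y, 0 ≤ θ j y
  sum_le_one : ∀ y, ∑ j ∈ N, θ j y ≤ 1
  sum_eq_one : ∀ y, ∀ x ∈ E, dist y x ≤ 10 * r → ∑ j ∈ N, θ j y = 1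
  dist_lt : ∀ j y, θ j y ≠ 0 → dist y j < 12 * r
  lipschitz : ∀ y y', ∑ j ∈ N, |θ j y - θ j y'| ≤ K * (dist y y' / r)

theorem isLipschitzPartition_tent_div {X : Type*} [PseudoMetricSpace X] {E : Set X} {r : ℝ}
    (hr : 0 < r) {N : Finset X} {M : ℕ} (hNE : ↑N ⊆ E) (hN : ∀ x ∈ E, ∃ j ∈ N, dist x j ≤ r)
    (hM : ∀ y, (N.filter fun j => dist y j < 12 * r).card ≤ M) :
    IsLipschitzPartition E r (4 * M) N fun j y => tent r j y / max 1 (∑ i ∈ N, tent r i y) where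
  subset := hNE
  nonneg j y := div_nonneg (tent_nonneg r j y) (zero_le_one.trans (le_max_left _ _))
  sum_le_one y := by
    rw [← Finset.sum_div]
    exact div_le_one_of_le₀ (le_max_right _ _) (zero_le_one.trans (le_max_left _ _))
  sum_eq_one y x hx hyx := by
    obtain ⟨j, hj, hxj⟩ := hN x hx
    have hone : 1 ≤ ∑ i ∈ N, tent r i y :=
      (one_le_tent hr (by linarith [dist_triangle y x j])).trans
        (Finset.single_le_sum (f := fun i => tent r i y) (fun i _ => tent_nonneg r i y) hj)
    rw [← Finset.sum_div, max_eq_right hone, div_self (one_pos.trans_le hone).ne']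
  dist_lt j y h := by
    by_contra! hfar
    exact h (by rw [tent_eq_zero hr hfar, zero_div])
  lipschitz y y' := by
    refine (sum_abs_div_max_one_sub_le N fun j => tent_nonneg r j y').trans ?_
    linarith [sum_abs_tent_sub_tent_le hr hM y y']

theorem exists_isLipschitzPartition (X : Type*) [NormedAddCommGroup X] [NormedSpace ℝ X]
    [FiniteDimensional ℝ X] :
    ∃ K : ℝ, 0 ≤ K ∧ ∀ (E : Set X) (r : ℝ), Bornology.IsBounded E → 0 < r →
      ∃ N θ, IsLipschitzPartition E r K N θ := by
  have : ProperSpace X := FiniteDimensional.proper_real X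
  obtain ⟨M, hM⟩ := exists_card_le_of_isSeparated X 12
  refine ⟨4 * M, by positivity, fun E r hE hr => ?_⟩
  lift r to NNReal using hr.le
  have hr0 : r ≠ 0 := (NNReal.coe_pos.1 hr).ne'
  obtain ⟨N, hNE, hsep, hcov⟩ := exists_finset_isSeparated_isCover hr0
    (hE.isCompact_closure.totallyBounded.subset subset_closure)
  refine ⟨N, _, isLipschitzPartition_tent_div hr hNE (fun x hx => ?_) fun y => ?_⟩
  · simpa [isCover_iff_subset_iUnion_closedBall] using
      isCover_iff_subset_iUnion_closedBall.1 hcov hx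
  · refine hM r y _ hr0 (fun j hj => ?_)
      (hsep.subset (Finset.coe_subset.2 (Finset.filter_subset _ _)))
    exact mem_closedBall'.2 (Finset.mem_filter.1 hj).2.le

theorem norm_sum_smul_le {ι X : Type*} [SeminormedAddCommGroup X] [NormedSpace ℝ X]
    (N : Finset ι) (a : ι → ℝ) (v : ι → X) {B : ℝ} (h : ∀ j ∈ N, a j ≠ 0 → ‖v j‖ ≤ B) :
    ‖∑ j ∈ N, a j • v j‖ ≤ (∑ j ∈ N, |a j|) * B := by
  rw [Finset.sum_mul]
  refine norm_sum_le_of_le _ fun j hj => ?_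
  rw [norm_smul, Real.norm_eq_abs]
  rcases eq_or_ne (a j) 0 with ha | ha
  · simp [ha]
  · exact mul_le_mul_of_nonneg_left (h j hj ha) (abs_nonneg _)

namespace IsLipschitzPartition

variable {X F : Type*} [PseudoMetricSpace X] [SeminormedAddCommGroup F] [NormedSpace ℝ F]
  {E : Set X} {r K B B' : ℝ} {N : Finset X} {θ : X → X → ℝ}

theorem norm_sum_le (hθ : IsLipschitzPartition E r K N θ) {v : X → F} {y : X} (hB : 0 ≤ B)
    (hv : ∀ j ∈ N, dist y j < 12 * r → ‖v j‖ ≤ B) : ‖∑ j ∈ N, θ j y • v j‖ ≤ B := by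
  refine (norm_sum_smul_le N _ v fun j hj h => hv j hj (hθ.dist_lt j y h)).trans ?_
  simp only [abs_of_nonneg (hθ.nonneg _ y)]
  exact mul_le_of_le_one_left hB (hθ.sum_le_one y)

theorem norm_sum_sub_sum_le (hθ : IsLipschitzPartition E r K N θ) {u v : X → F} {y y' : X}
    (hB : 0 ≤ B) (hB' : 0 ≤ B') (huv : ∀ j ∈ N, dist y j < 12 * r → ‖u j - v j‖ ≤ B)
    (hv : ∀ j ∈ N, dist y j < 12 * r ∨ dist y' j < 12 * r → ‖v j‖ ≤ B') :
    ‖∑ j ∈ N, θ j y • u j - ∑ j ∈ N, θ j y' • v j‖ ≤ B + K * (dist y y' / r) * B' := by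
  have hsplit : ∑ j ∈ N, θ j y • u j - ∑ j ∈ N, θ j y' • v j =
      ∑ j ∈ N, θ j y • (u j - v j) + ∑ j ∈ N, (θ j y - θ j y') • v j := by
    rw [← Finset.sum_sub_distrib, ← Finset.sum_add_distrib]
    exact Finset.sum_congr rfl fun j _ => by module
  rw [hsplit]
  refine norm_add_le_of_le (hθ.norm_sum_le hB huv) ?_
  refine (norm_sum_smul_le N _ v (B := B') fun j hj h => hv j hj ?_).trans
    (mul_le_mul_of_nonneg_right (hθ.lipschitz y y') hB')
  by_contra! hfar
  have hzero : ∀ z, 12 * r ≤ dist z j → θ j z = 0 := fun z hz => by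
    by_contra h
    exact hz.not_gt (hθ.dist_lt j z h)
  exact h (by rw [hzero y hfar.1, hzero y' hfar.2, sub_self])

end IsLipschitzPartition

end LipschitzPartition

section Perturbation

variable {X : Type*} [NormedAddCommGroup X]

/-- `f` is a perturbation of the identity: its displacement `y ↦ f y - y` has size at most `δ r` and
Lipschitz constant at most `δ`. -/
structure IsNearIdentity (f : X → X) (δ r : ℝ) : Prop where
  norm_sub_sub_le : ∀ y y', ‖f y - f y' - (y - y')‖ ≤ δ * ‖y - y'‖
  dist_le : ∀ y, dist (f y) y ≤ δ * r

namespace IsNearIdentity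

variable {f : X → X} {δ r : ℝ}

theorem nonneg (hf : IsNearIdentity f δ r) (hr : 0 < r) : 0 ≤ δ :=
  nonneg_of_mul_nonneg_left (dist_nonneg.trans (hf.dist_le 0)) hr

theorem mono {δ' : ℝ} (hf : IsNearIdentity f δ r) (hr : 0 ≤ r) (hδ : δ ≤ δ') :
    IsNearIdentity f δ' r where
  norm_sub_sub_le y y' := (hf.norm_sub_sub_le y y').trans (by gcongr)
  dist_le y := (hf.dist_le y).trans (by gcongr)

theorem dist_map_le (hf : IsNearIdentity f δ r) (y y' : X) :
    dist (f y) (f y') ≤ (1 + δ) * dist y y' := by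
  simp only [dist_eq_norm]
  linarith [norm_le_norm_sub_add (f y - f y') (y - y'), hf.norm_sub_sub_le y y']

theorem le_dist_map (hf : IsNearIdentity f δ r) (y y' : X) :
    (1 - δ) * dist y y' ≤ dist (f y) (f y') := by
  simp only [dist_eq_norm]
  linarith [norm_le_norm_add_norm_sub (f y - f y') (y - y'), hf.norm_sub_sub_le y y']

theorem continuous (hf : IsNearIdentity f δ r) : Continuous f :=
  (LipschitzWith.of_dist_le' hf.dist_map_le).continuous

end IsNearIdentity

theorem lipschitzOnWith_indicator_union {S : Set X} {h : X → X} {r : ℝ} {Λ : NNReal}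
    (hr : 0 < r) (hlip : LipschitzOnWith Λ h S) (hbd : ∀ y ∈ S, ‖h y‖ ≤ Λ * r) :
    LipschitzOnWith Λ (S.indicator h) (S ∪ {y | ∀ s ∈ S, r ≤ dist y s}) := by
  have hfar : ∀ y, (∀ s ∈ S, r ≤ dist y s) → S.indicator h y = 0 := fun y hy =>
    indicator_of_notMem (fun hyS => hr.not_ge (by simpa using hy y hyS)) h
  refine LipschitzOnWith.of_dist_le_mul ?_
  rintro y (hy | hy) y' (hy' | hy')
  · rw [indicator_of_mem hy, indicator_of_mem hy']
    exact hlip.dist_le_mul y hy y' hy'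
  · rw [indicator_of_mem hy, hfar y' hy', dist_zero_right, dist_comm]
    exact (hbd y hy).trans (mul_le_mul_of_nonneg_left (hy' y hy) Λ.2)
  · rw [hfar y hy, indicator_of_mem hy', dist_zero_left]
    exact (hbd y' hy').trans (mul_le_mul_of_nonneg_left (hy y' hy') Λ.2)
  · rw [hfar y hy, hfar y' hy', dist_self]
    positivity

variable [NormedSpace ℝ X]

theorem exists_eq_of_norm_sub_sub_le [CompleteSpace X] {f : X → X} {c ρ : ℝ} {b q : X}
    (hc : 0 ≤ c) (hρ : 0 ≤ ρ)
    (hf : ∀ v ∈ closedBall b ρ, ∀ w ∈ closedBall b ρ, ‖f v - f w - (v - w)‖ ≤ c * ‖v - w‖)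
    (hq : dist q (f b) ≤ (1 - c) * ρ) : ∃ v ∈ closedBall b ρ, f v = q := by
  lift c to NNReal using hc
  have happrox : ApproximatesLinearOn f (ContinuousLinearMap.id ℝ X) (closedBall b ρ) c := hf
  refine happrox.surjOn_closedBall_of_nonlinearRightInverse
    ⟨id, 1, fun y => by simp, fun y => rfl⟩ hρ subset_rfl ?_
  simpa using hq

theorem IsNearIdentity.surjective [CompleteSpace X] {f : X → X} {δ r : ℝ}
    (hf : IsNearIdentity f δ r) (hr : 0 < r) (hδ : δ < 1) : Function.Surjective f := fun q => by
  have hδ0 := hf.nonneg hr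
  have hδ1 : 0 < 1 - δ := sub_pos.2 hδ
  obtain ⟨v, -, hv⟩ := exists_eq_of_norm_sub_sub_le (b := q) (q := q) (ρ := δ * r / (1 - δ)) hδ0
    (by positivity) (fun v _ w _ => hf.norm_sub_sub_le v w)
    (by rw [mul_div_cancel₀ _ hδ1.ne', dist_comm]; exact hf.dist_le q)
  exact ⟨v, hv⟩

theorem exists_isNearIdentity_eqOn (X : Type*) [NormedAddCommGroup X] [NormedSpace ℝ X]
    [FiniteDimensional ℝ X] :
    ∃ L : ℝ, 1 ≤ L ∧ ∀ (S : Set X) (h : X → X) (r Λ : ℝ), 0 < r → 0 ≤ Λ →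
      (∀ y ∈ S, ∀ y' ∈ S, ‖h y - h y'‖ ≤ Λ * ‖y - y'‖) → (∀ y ∈ S, ‖h y‖ ≤ Λ * r) →
      ∃ f, IsNearIdentity f (L * Λ) r ∧ ∀ y ∈ S, f y = y + h y := by
  let c := lipschitzExtensionConstant X
  refine ⟨1 + c, by simp, fun S h r Λ hr hΛ hlip hbd => ?_⟩
  lift Λ to NNReal using hΛ
  obtain ⟨k, hk, hkf⟩ := (lipschitzOnWith_indicator_union hr (LipschitzOnWith.of_dist_le_mul
    fun y hy y' hy' => by simpa [dist_eq_norm] using hlip y hy y' hy')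
    hbd).extend_finite_dimension
  have hkS : EqOn k h S := fun y hy => by rw [← hkf (Or.inl hy), indicator_of_mem hy]
  have hklip : ∀ y y', ‖k y - k y'‖ ≤ c * Λ * ‖y - y'‖ := fun y y' => by
    simpa [dist_eq_norm, c] using hk.dist_le_mul y y'
  refine ⟨fun y => y + k y, ⟨fun y y' => ?_, fun y => ?_⟩, fun y hy => by simp only [hkS hy]⟩
  · rw [add_sub_add_comm, add_sub_cancel_left]
    refine (hklip y y').trans ?_
    gcongr
    simp
  · rw [dist_self_add_left]
    by_cases hy : ∀ s ∈ S, r ≤ dist y s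
    · rw [← hkf (Or.inr hy), indicator_of_notMem fun hyS => hr.not_ge (by simpa using hy y hyS),
        norm_zero]
      positivity
    · push Not at hy
      obtain ⟨s, hs, hys⟩ := hy
      rw [dist_eq_norm] at hys
      calc ‖k y‖ ≤ ‖k y - k s‖ + ‖k s‖ := norm_le_norm_sub_add _ _
        _ ≤ c * Λ * r + Λ * r :=
          add_le_add ((hklip y s).trans (by gcongr)) (hkS hs ▸ hbd s hs)
        _ = (1 + c) * Λ * r := by ring

end Perturbation

section LocalGraph

variable {X : Type*} [NormedAddCommGroup X] [NormedSpace ℝ X]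

/-- A bicontractive projection: `p` is idempotent and both `p` and its complement `1 - p` have norm
at most `1`. The orthogonal projections of a Euclidean space are examples. -/
structure IsBicontractiveProj (p : X →L[ℝ] X) : Prop where
  isIdempotentElem : IsIdempotentElem p
  norm_le_one : ‖p‖ ≤ 1
  norm_one_sub_le_one : ‖1 - p‖ ≤ 1

namespace IsBicontractiveProj

variable {p : X →L[ℝ] X}

theorem apply_apply (hp : IsBicontractiveProj p) (v : X) : p (p v) = p v :=
  DFunLike.congr_fun hp.isIdempotentElem v

theorem norm_apply_le (hp : IsBicontractiveProj p) (v : X) : ‖p v‖ ≤ ‖v‖ := by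
  simpa using p.le_of_opNorm_le hp.norm_le_one v

theorem norm_one_sub_apply_le (hp : IsBicontractiveProj p) (v : X) : ‖(1 - p) v‖ ≤ ‖v‖ := by
  simpa using (1 - p).le_of_opNorm_le hp.norm_one_sub_le_one v

end IsBicontractiveProj

theorem norm_le_norm_apply_add_norm_one_sub_apply (p : X →L[ℝ] X) (v : X) :
    ‖v‖ ≤ ‖p v‖ + ‖(1 - p) v‖ := by
  simpa using norm_add_le (p v) ((1 - p) v)

theorem norm_one_sub_apply_le_add {p p' : X →L[ℝ] X} {η : ℝ} (h : ‖p - p'‖ ≤ η) (v : X) :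
    ‖(1 - p') v‖ ≤ ‖(1 - p) v‖ + η * ‖v‖ := by
  have hsplit : (1 - p') v = (1 - p) v + (p - p') v := by simp
  rw [hsplit]
  exact norm_add_le_of_le le_rfl ((p - p').le_of_opNorm_le h v)

theorem eq_zero_of_apply_eq_zero_of_apply_eq_self {p p' : X →L[ℝ] X} {u : X} (h : ‖p - p'‖ < 1)
    (hp : p u = 0) (hp' : p' u = u) : u = 0 := by
  have hu := (p - p').le_opNorm u
  rw [sub_apply, hp, hp', zero_sub, norm_neg] at hu
  exact norm_eq_zero.1 (by nlinarith [norm_nonneg u])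

theorem IsNearIdentity.norm_apply_sub_le {p p' : X →L[ℝ] X} {f : X → X} {δ s η : ℝ}
    (hf : IsNearIdentity f δ s) (hp : IsBicontractiveProj p) (hp' : IsBicontractiveProj p')
    (h : ‖p - p'‖ ≤ η) (y y' : X) :
    ‖p (p' (f y - f y') - (y - y'))‖ ≤ (δ + η) * ‖y - y'‖ := by
  have hsplit : p (p' (f y - f y') - (y - y')) =
      p (p' (f y - f y' - (y - y')) + (p' - p) (y - y')) := by
    simp only [map_add, map_sub, sub_apply, hp.apply_apply]
    abel
  rw [hsplit, add_mul]
  refine (hp.norm_apply_le _).trans (norm_add_le_of_le ((hp'.norm_apply_le _).trans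
    (hf.norm_sub_sub_le y y')) ((p' - p).le_of_opNorm_le (by rwa [norm_sub_rev]) _))

/-- Inside the ball `B(x, R)`, the set `S` is an `A`-Lipschitz graph over the range of the
projection `p`, in the sense that it satisfies a cone condition, and this graph, translated by `-x`,
lies over the whole disc of radius `ρ`. -/
structure IsLocalGraph (p : X →L[ℝ] X) (S : Set X) (x : X) (R ρ A : ℝ) : Prop where
  cone : ∀ y ∈ S ∩ ball x R, ∀ y' ∈ S ∩ ball x R, ‖(1 - p) (y - y')‖ ≤ A * ‖y - y'‖
  cover : ∀ q, p q = q → ‖q‖ ≤ ρ → ∃ y ∈ S ∩ ball x R, p (y - x) = q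

namespace IsLocalGraph

variable {p p' : X →L[ℝ] X} {S : Set X} {x x' y : X} {R R' ρ ρ' A A' δ η s : ℝ} {f : X → X}

theorem recenter (hG : IsLocalGraph p S x R ρ A) (hp : IsBicontractiveProj p)
    (hy : y ∈ S ∩ ball x R) (hA : A < 1) (hR : dist y x + R' ≤ R) (hρ : ρ' + dist y x ≤ ρ)
    (hρR : ρ' < (1 - A) * R') : IsLocalGraph p S y R' ρ' A where
  cone z hz z' hz' := by
    have hball : ball y R' ⊆ ball x R := ball_subset_ball' (by linarith)
    exact hG.cone z ⟨hz.1, hball hz.2⟩ z' ⟨hz'.1, hball hz'.2⟩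
  cover q hq hqρ := by
    rw [dist_eq_norm] at hρ
    obtain ⟨z, hz, hzq⟩ := hG.cover (q + p (y - x)) (by rw [map_add, hp.apply_apply, hq])
      ((norm_add_le_of_le hqρ (hp.norm_apply_le _)).trans hρ)
    have hzy : p (z - y) = q := by
      rw [← sub_sub_sub_cancel_right z y x, map_sub, hzq, add_sub_cancel_right]
    refine ⟨z, ⟨hz.1, ?_⟩, hzy⟩
    have hnorm := norm_le_norm_apply_add_norm_one_sub_apply p (z - y)
    rw [hzy] at hnorm
    rw [mem_ball, dist_eq_norm]
    refine lt_of_mul_lt_mul_left ?_ (sub_pos.2 hA).le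
    linarith [hG.cone z hz y hy]

theorem exists_section (hG : IsLocalGraph p S x R ρ A) (hp : IsBicontractiveProj p)
    (hA : A ≤ 1 / 2) :
    ∃ γ : X → X, ∀ v ∈ closedBall 0 ρ, γ v ∈ S ∩ ball x R ∧ p (γ v - x) = p v ∧
      ∀ w ∈ closedBall 0 ρ, ‖γ v - γ w‖ ≤ 2 * ‖v - w‖ := by
  have hcov : ∀ v ∈ closedBall (0 : X) ρ, ∃ y ∈ S ∩ ball x R, p (y - x) = p v := fun v hv =>
    hG.cover (p v) (hp.apply_apply v) ((hp.norm_apply_le v).trans (by simpa using hv))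
  choose! γ hγS hγ using hcov
  refine ⟨γ, fun v hv => ⟨hγS v hv, hγ v hv, fun w hw => ?_⟩⟩
  have hpγ : p (γ v - γ w) = p (v - w) := by
    rw [← sub_sub_sub_cancel_right _ _ x, map_sub, hγ v hv, hγ w hw, map_sub]
  have hnorm := norm_le_norm_apply_add_norm_one_sub_apply p (γ v - γ w)
  rw [hpγ] at hnorm
  nlinarith [hG.cone _ (hγS v hv) _ (hγS w hw), hp.norm_apply_le (v - w), norm_nonneg (γ v - γ w)]

theorem exists_apply_map_sub_eq [CompleteSpace X] (hG : IsLocalGraph p S x R ρ A)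
    (hp : IsBicontractiveProj p) (hp' : IsBicontractiveProj p') (hf : IsNearIdentity f δ s)
    (hA : A ≤ 1 / 2) (hδ : 0 ≤ δ) (hpp : ‖p - p'‖ ≤ η) (hηδ : η + δ ≤ 1 / 20) (hρ : 0 ≤ ρ)
    {q' : X} (hq' : p' q' = q') (hsmall : η * R + δ * s + dist x x' + ‖q'‖ ≤ 9 / 10 * ρ) :
    ∃ y ∈ S ∩ ball x R, p' (f y - x') = q' := by
  obtain ⟨γ, hγ⟩ := hG.exists_section hp hA
  have hpp' : ∀ v, ‖(p' - p) v‖ ≤ η * ‖v‖ := (p' - p).le_of_opNorm_le (by rwa [norm_sub_rev])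
  have hη : 0 ≤ η := (norm_nonneg _).trans hpp
  -- `Φ` is a perturbation of the identity, and `Φ v = p q'` forces `p' (f (γ v) - x') = q'`.
  let Φ : X → X := fun v => v + p (p' (f (γ v) - x') - v)
  have hΦ : ∀ v ∈ closedBall 0 ρ, ∀ w ∈ closedBall 0 ρ,
      ‖Φ v - Φ w - (v - w)‖ ≤ 1 / 10 * ‖v - w‖ := fun v hv w hw => by
    have hdiff : Φ v - Φ w - (v - w) = p (p' (f (γ v) - f (γ w)) - (γ v - γ w)) := by
      have hpγ : p (γ v - γ w) = p (v - w) := by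
        rw [← sub_sub_sub_cancel_right _ _ x, map_sub, (hγ v hv).2.1, (hγ w hw).2.1, map_sub]
      rw [map_sub p (p' _), hpγ]
      simp only [Φ, map_sub]
      abel
    rw [hdiff]
    refine (hf.norm_apply_sub_le hp hp' hpp _ _).trans ?_
    nlinarith [norm_nonneg (γ v - γ w), (hγ v hv).2.2 w hw]
  have h0 := mem_closedBall_self hρ (x := (0 : X))
  have hΦ0 : dist (p q') (Φ 0) ≤ (1 - 1 / 10) * ρ := by
    have hγ0 : p (γ 0 - x) = 0 := by rw [(hγ 0 h0).2.1, map_zero]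
    have hdiff : p q' - Φ 0 =
        p (q' - p' (f (γ 0) - γ 0) - p' (x - x') - (p' - p) (γ 0 - x)) := by
      rw [sub_apply, hγ0]
      simp only [Φ, map_sub, map_zero]
      abel
    have hR : ‖γ 0 - x‖ ≤ R := (mem_ball_iff_norm.1 (hγ 0 h0).1.2).le
    rw [dist_eq_norm, hdiff]
    refine (hp.norm_apply_le _).trans ((norm_sub_le_of_le (norm_sub_le_of_le (norm_sub_le_of_le
      le_rfl ((hp'.norm_apply_le _).trans (mem_closedBall_iff_norm.1 (hf.dist_le (γ 0)))))
      (hp'.norm_apply_le _)) ((hpp' _).trans (mul_le_mul_of_nonneg_left hR hη))).trans ?_)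
    rw [← dist_eq_norm]
    linarith
  obtain ⟨v, hv, hΦv⟩ := exists_eq_of_norm_sub_sub_le (by norm_num) hρ hΦ hΦ0
  refine ⟨γ v, (hγ v hv).1, sub_eq_zero.1 (eq_zero_of_apply_eq_zero_of_apply_eq_self (p := p)
    (p' := p') (hpp.trans_lt (by linarith)) ?_ (by rw [map_sub, hp'.apply_apply, hq']))⟩
  have hpΦ := congrArg p hΦv
  simp only [Φ, map_add, map_sub, hp.apply_apply] at hpΦ ⊢
  rw [← hpΦ]
  abel

theorem image [CompleteSpace X] (hG : IsLocalGraph p S x R ρ A) (hp : IsBicontractiveProj p)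
    (hp' : IsBicontractiveProj p') (hf : IsNearIdentity f δ s) (hA : A ≤ 1 / 2) (hδ : 0 ≤ δ)
    (hpp : ‖p - p'‖ ≤ η) (hηδ : η + δ ≤ 1 / 20) (hρ : 0 ≤ ρ) (hR : R' + δ * s + dist x x' ≤ R)
    (hsmall : η * R + δ * s + dist x x' + ρ' ≤ 9 / 10 * ρ)
    (hcone : ∀ y ∈ S ∩ ball x R, ∀ y' ∈ S ∩ ball x R,
      ‖(1 - p') (f y - f y')‖ ≤ A' * ‖f y - f y'‖)
    (hball : ∀ y ∈ S ∩ ball x R, ‖p' (f y - x')‖ ≤ ρ' → f y ∈ ball x' R') :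
    IsLocalGraph p' (f '' S) x' R' ρ' A' where
  cone := by
    have hback : ∀ y, f y ∈ ball x' R' → y ∈ ball x R := fun y hy => by
      rw [mem_ball] at hy ⊢
      linarith [dist_triangle4 y (f y) x' x, hf.dist_le y, dist_comm y (f y), dist_comm x x']
    rintro _ ⟨⟨y, hy, rfl⟩, hyR⟩ _ ⟨⟨y', hy', rfl⟩, hyR'⟩
    exact hcone y ⟨hy, hback y hyR⟩ y' ⟨hy', hback y' hyR'⟩
  cover q hq hqρ := by
    obtain ⟨y, hy, rfl⟩ := hG.exists_apply_map_sub_eq (x' := x') hp hp' hf hA hδ hpp hηδ hρ hq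
      (by linarith)
    exact ⟨f y, ⟨mem_image_of_mem f hy.1, hball y hy hqρ⟩, rfl⟩

end IsLocalGraph

section Flat

variable {p : X →L[ℝ] X} {S : Set X} {y : X} {r A A' δ : ℝ} {f : X → X}

theorem IsLocalGraph.image_of_cone [CompleteSpace X]
    (hG : IsLocalGraph p S y (4 * r) (2 * r) A) (hp : IsBicontractiveProj p)
    (hf : IsNearIdentity f δ r) (hr : 0 < r) (hA : A ≤ 1 / 2) (hA' : A' < 1 / 2)
    (hδ : δ ≤ 1 / 20) (hcone : ∀ z ∈ S ∩ ball y (4 * r), ∀ z' ∈ S ∩ ball y (4 * r),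
      ‖(1 - p) (f z - f z')‖ ≤ A' * ‖f z - f z'‖) (hy : y ∈ S) :
    IsLocalGraph p (f '' S) (f y) (4 * (r / 10)) (2 * (r / 10)) A' := by
  have hδ0 := hf.nonneg hr
  have hδr : δ * r ≤ 1 / 20 * r := by gcongr
  have hfy : dist y (f y) ≤ δ * r := dist_comm y (f y) ▸ hf.dist_le y
  refine hG.image hp hp hf hA hδ0 (η := 0) (by simp) (by linarith) (by positivity) (by linarith)
    (by linarith) hcone fun z hz hpz => mem_ball_iff_norm.2 ?_
  have hnorm := norm_le_norm_apply_add_norm_one_sub_apply p (f z - f y)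
  nlinarith [hcone z hz y ⟨hy, mem_ball_self (by linarith)⟩, norm_nonneg (f z - f y)]

theorem IsLocalGraph.image_flat [CompleteSpace X] (hG : IsLocalGraph p S y (4 * r) (2 * r) A)
    (hp : IsBicontractiveProj p) (hf : IsNearIdentity f δ r) (hr : 0 < r) (hA0 : 0 ≤ A)
    (hA : A ≤ 1 / 10) (hδ : δ ≤ 1 / 20) (hy : y ∈ S) :
    IsLocalGraph p (f '' S) (f y) (4 * (r / 10)) (2 * (r / 10)) (2 * (A + δ)) := by
  refine hG.image_of_cone hp hf hr (by linarith) (by linarith) hδ (fun z hz z' hz' => ?_) hy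
  have hδ0 := hf.nonneg hr
  have hsplit : (1 - p) (f z - f z') = (1 - p) (z - z') + (1 - p) (f z - f z' - (z - z')) := by
    rw [← map_add, add_sub_cancel]
  have hzz : ‖z - z'‖ ≤ 2 * ‖f z - f z'‖ := by
    have := hf.le_dist_map z z'
    rw [dist_eq_norm, dist_eq_norm] at this
    nlinarith [norm_nonneg (z - z')]
  calc ‖(1 - p) (f z - f z')‖ ≤ A * ‖z - z'‖ + δ * ‖z - z'‖ := by
        rw [hsplit]
        exact norm_add_le_of_le (hG.cone z hz z' hz')
          ((hp.norm_one_sub_apply_le _).trans (hf.norm_sub_sub_le z z'))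
    _ = (A + δ) * ‖z - z'‖ := by ring
    _ ≤ (A + δ) * (2 * ‖f z - f z'‖) := by gcongr
    _ = 2 * (A + δ) * ‖f z - f z'‖ := by ring

theorem IsLocalGraph.image_of_eqOn_id [CompleteSpace X]
    (hG : IsLocalGraph p S y (4 * r) (2 * r) A) (hp : IsBicontractiveProj p)
    (hf : IsNearIdentity f δ r) (hr : 0 < r) (hA : A < 1 / 2) (hδ : δ ≤ 1 / 20)
    (hid : EqOn f id (S ∩ ball y (4 * r))) (hy : y ∈ S) :
    IsLocalGraph p (f '' S) (f y) (4 * (r / 10)) (2 * (r / 10)) A :=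
  hG.image_of_cone hp hf hr hA.le hA hδ
    (fun z hz z' hz' => by simpa [hid hz, hid hz'] using hG.cone z hz z' hz') hy

end Flat

section NearPlane

/-- In the ball `B(x, 20 r)`, the set `S` is a local graph over the range of `p` that stays within
distance `A r` of the plane through `x` parallel to this range. -/
structure IsNearPlane (p : X →L[ℝ] X) (S : Set X) (x : X) (r A : ℝ) : Prop
    extends IsLocalGraph p S x (20 * r) (19 * r) A where
  height : ∀ y ∈ S ∩ ball x (20 * r), ‖(1 - p) (y - x)‖ ≤ A * r

namespace IsNearPlane

variable {p p' : X →L[ℝ] X} {S : Set X} {x : X} {r A B D δ η : ℝ} {f : X → X}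

theorem isLocalGraph_three_mul (hS : IsNearPlane p S x r A) (hr : 0 < r) (hA : A < 1 / 2) :
    IsLocalGraph p S x (3 * r) (5 / 2 * r) A where
  cone y hy y' hy' := by
    have hball : ball x (3 * r) ⊆ ball x (20 * r) := ball_subset_ball (by linarith)
    exact hS.cone y ⟨hy.1, hball hy.2⟩ y' ⟨hy'.1, hball hy'.2⟩
  cover q hq hqr := by
    obtain ⟨y, hy, rfl⟩ := hS.cover q hq (by linarith)
    refine ⟨y, ⟨hy.1, mem_ball_iff_norm.2 ?_⟩, rfl⟩
    nlinarith [norm_le_norm_apply_add_norm_one_sub_apply p (y - x), hS.height y hy]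

theorem image [CompleteSpace X] (hS : IsNearPlane p S x r A) (hp : IsBicontractiveProj p)
    (hp' : IsBicontractiveProj p') (hf : IsNearIdentity f δ r) (hr : 0 < r) (hA : A ≤ 1 / 100)
    (hδ : δ ≤ 1 / 100) (hpp : ‖p - p'‖ ≤ η) (hη : η ≤ 1 / 100) (hB : 10 * (B + 2 * η) ≤ A)
    (hD0 : 0 ≤ D) (hD : 2 * D + η ≤ A)
    (hheight : ∀ y ∈ S ∩ ball x (3 * r), ‖(1 - p) (f y - x)‖ ≤ B * r)
    (hcone : ∀ y ∈ S ∩ ball x (3 * r), ∀ y' ∈ S ∩ ball x (3 * r),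
      ‖(1 - p) (f y - f y')‖ ≤ D * ‖y - y'‖) :
    IsNearPlane p' (f '' S) x (r / 10) A := by
  have hη0 : 0 ≤ η := (norm_nonneg _).trans hpp
  have hδr : δ * r ≤ 1 / 100 * r := by gcongr
  have hηr : η * r ≤ 1 / 100 * r := by gcongr
  have hBr : B * r ≤ (A / 10 - 2 * η) * r := by gcongr; linarith
  have hAr : A * r ≤ 1 / 100 * r := by gcongr
  have hgraph : IsLocalGraph p' (f '' S) x (20 * (r / 10)) (19 * (r / 10)) A := by
    refine (hS.isLocalGraph_three_mul hr (by linarith)).image hp hp' hf (by linarith)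
      (hf.nonneg hr) hpp (by linarith) (by linarith) (by rw [dist_self]; linarith)
      (by rw [dist_self]; linarith) (fun y hy y' hy' => ?_) fun y hy hpy => ?_
    · have hyy : ‖y - y'‖ ≤ 2 * ‖f y - f y'‖ := by
        have := hf.le_dist_map y y'
        rw [dist_eq_norm, dist_eq_norm] at this
        nlinarith [norm_nonneg (y - y')]
      calc ‖(1 - p') (f y - f y')‖ ≤ D * (2 * ‖f y - f y'‖) + η * ‖f y - f y'‖ :=
            (norm_one_sub_apply_le_add hpp _).trans
              (add_le_add_left ((hcone y hy y' hy').trans (by gcongr)) _)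
        _ = (2 * D + η) * ‖f y - f y'‖ := by ring
        _ ≤ A * ‖f y - f y'‖ := by gcongr
    · have hfyx : ‖f y - x‖ ≤ 4 * r := by
        rw [← dist_eq_norm]
        linarith [dist_triangle (f y) y x, hf.dist_le y, mem_ball.1 hy.2]
      have hηfy : η * ‖f y - x‖ ≤ η * (4 * r) := by gcongr
      rw [mem_ball_iff_norm]
      linarith [norm_le_norm_apply_add_norm_one_sub_apply p' (f y - x),
        norm_one_sub_apply_le_add hpp (f y - x), hheight y hy]
  refine ⟨hgraph, ?_⟩
  rintro _ ⟨⟨y, hy, rfl⟩, hyr⟩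
  rw [mem_ball] at hyr
  have hyx : y ∈ ball x (3 * r) := by
    rw [mem_ball]
    linarith [dist_triangle_left y x (f y), hf.dist_le y]
  rw [dist_eq_norm] at hyr
  have hηfy : η * ‖f y - x‖ ≤ η * (20 * (r / 10)) := by gcongr
  linarith [norm_one_sub_apply_le_add hpp (f y - x), hheight y ⟨hy, hyx⟩]

end IsNearPlane

end NearPlane

end LocalGraph

section Step

variable {X : Type*} [NormedAddCommGroup X] [NormedSpace ℝ X]

/-- The planes `x + range (P x)`, for `x ∈ E`, approximate `E` and vary slowly at scale `r`, with
precision `η`. -/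
structure IsCoherent (E : Set X) (P : X → X →L[ℝ] X) (r η : ℝ) : Prop where
  proj : ∀ x ∈ E, IsBicontractiveProj (P x)
  norm_sub_le : ∀ x ∈ E, ∀ y ∈ E, dist x y ≤ 50 * r → ‖P x - P y‖ ≤ η
  height : ∀ x ∈ E, ∀ y ∈ E, dist x y ≤ 50 * r → ‖(1 - P x) (y - x)‖ ≤ η * r

/-- The average, with weights `θ j y`, of the offsets of `y` from the planes `j + range (P j)`.
Subtracting it moves `y` to a weighted average of its projections onto these planes. -/
def planeOffset (N : Finset X) (θ : X → X → ℝ) (P : X → X →L[ℝ] X) (y : X) : X :=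
  ∑ j ∈ N, θ j y • (1 - P j) (y - j)

section PlaneOffset

variable {E S : Set X} {P : X → X →L[ℝ] X} {r η A K : ℝ} {N : Finset X} {θ : X → X → ℝ}
  {x y y' j : X}

theorem norm_planeOffset_le (hθ : IsLipschitzPartition E r K N θ) (hr : 0 < r) (hA : 0 ≤ A)
    (hS : ∀ x ∈ E, IsNearPlane (P x) S x r A) (hy : y ∈ S) : ‖planeOffset N θ P y‖ ≤ A * r :=
  hθ.norm_sum_le (by positivity) fun j hj hyj =>
    (hS j (hθ.subset hj)).height y ⟨hy, mem_ball.2 (by linarith)⟩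

theorem norm_planeOffset_sub_le (hθ : IsLipschitzPartition E r K N θ) (hr : 0 < r) (hA : 0 ≤ A)
    (hK : 0 ≤ K) (hS : ∀ x ∈ E, IsNearPlane (P x) S x r A) (hy : y ∈ S) (hy' : y' ∈ S) :
    ‖planeOffset N θ P y - planeOffset N θ P y'‖ ≤ (2 + K) * A * ‖y - y'‖ := by
  have hAy : 0 ≤ A * ‖y - y'‖ := by positivity
  have hKA : 0 ≤ K * A * ‖y - y'‖ := by positivity
  rcases le_or_gt r (dist y y') with hfar | hnear
  · rw [dist_eq_norm] at hfar
    have hAr : A * r ≤ A * ‖y - y'‖ := by gcongr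
    linarith [norm_sub_le_of_le (norm_planeOffset_le hθ hr hA hS hy)
      (norm_planeOffset_le hθ hr hA hS hy')]
  · have hball : ∀ j, dist y j < 12 * r ∨ dist y' j < 12 * r →
        y ∈ ball j (20 * r) ∧ y' ∈ ball j (20 * r) := fun j hj => by
      simp only [mem_ball]
      rcases hj with hj | hj
      · constructor <;> linarith [dist_triangle_left y' j y]
      · constructor <;> linarith [dist_triangle y y' j]
    have hsum := hθ.norm_sum_sub_sum_le (u := fun j => (1 - P j) (y - j))
      (v := fun j => (1 - P j) (y' - j)) (y := y) (y' := y') hAy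
      (by positivity : 0 ≤ A * r) (fun j hj hyj => ?_) fun j hj hyj =>
        (hS j (hθ.subset hj)).height y' ⟨hy', (hball j hyj).2⟩
    · have hscale : K * (dist y y' / r) * (A * r) = K * A * ‖y - y'‖ := by
        rw [dist_eq_norm]
        field_simp
      rw [hscale] at hsum
      exact hsum.trans (by linarith)
    · rw [← map_sub, sub_sub_sub_cancel_right]
      have hyy := hball j (Or.inl hyj)
      exact (hS j (hθ.subset hj)).cone y ⟨hy, hyy.1⟩ y' ⟨hy', hyy.2⟩

theorem map_sub_planeOffset_sub (Q : X →L[ℝ] X) (h : ∑ j ∈ N, θ j y = 1) :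
    Q (y - planeOffset N θ P y - x) = ∑ j ∈ N, θ j y • Q (j - x + P j (y - j)) := by
  have hyx : y - x = ∑ j ∈ N, θ j y • (y - x) := by rw [← Finset.sum_smul, h, one_smul]
  rw [sub_right_comm, planeOffset, hyx, ← Finset.sum_sub_distrib, map_sum]
  refine Finset.sum_congr rfl fun j _ => ?_
  rw [← smul_sub, map_smul]
  congr 2
  simp only [sub_apply, one_apply_eq_self]
  abel

namespace IsCoherent

theorem norm_one_sub_apply_apply_le (hP : IsCoherent E P r η) (hx : x ∈ E) (hj : j ∈ E)
    (hxj : dist x j ≤ 50 * r) (v : X) : ‖(1 - P x) (P j v)‖ ≤ η * ‖v‖ := by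
  have hη : 0 ≤ η := (norm_nonneg _).trans (hP.norm_sub_le x hx j hj hxj)
  have hdiff : (1 - P x) (P j v) = (P j - P x) (P j v) := by simp [(hP.proj j hj).apply_apply]
  rw [hdiff]
  exact ((P j - P x).le_of_opNorm_le (norm_sub_rev (P x) (P j) ▸ hP.norm_sub_le x hx j hj hxj)
    _).trans (mul_le_mul_of_nonneg_left ((hP.proj j hj).norm_apply_le v) hη)

theorem norm_one_sub_apply_add_le (hP : IsCoherent E P r η) (hr : 0 < r) (hx : x ∈ E)
    (hj : j ∈ E) (hyx : dist y x < 3 * r) (hxj : dist x j < 15 * r) :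
    ‖(1 - P x) (j - x + P j (y - j))‖ ≤ 19 * η * r := by
  have hη : 0 ≤ η := (norm_nonneg _).trans (hP.norm_sub_le x hx j hj (by linarith))
  have hyj : ‖y - j‖ ≤ 18 * r := by
    rw [← dist_eq_norm]
    linarith [dist_triangle y x j]
  rw [map_add]
  calc ‖(1 - P x) (j - x) + (1 - P x) (P j (y - j))‖ ≤ η * r + η * (18 * r) :=
        norm_add_le_of_le (hP.height x hx j hj (by linarith))
          ((hP.norm_one_sub_apply_apply_le hx hj (by linarith) _).trans (by gcongr))
    _ = 19 * η * r := by ring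

theorem norm_one_sub_apply_sub_planeOffset_le (hP : IsCoherent E P r η)
    (hθ : IsLipschitzPartition E r K N θ) (hr : 0 < r) (hx : x ∈ E) (hy : dist y x < 3 * r) :
    ‖(1 - P x) (y - planeOffset N θ P y - x)‖ ≤ 19 * η * r := by
  have hη : 0 ≤ η := (norm_nonneg _).trans
    (hP.norm_sub_le x hx x hx (by rw [dist_self]; positivity))
  rw [map_sub_planeOffset_sub _ (hθ.sum_eq_one y x hx (by linarith))]
  exact hθ.norm_sum_le (by positivity) fun j hj hyj =>
    hP.norm_one_sub_apply_add_le hr hx (hθ.subset hj) hy (by linarith [dist_triangle_left x j y])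

theorem norm_one_sub_apply_sub_planeOffset_sub_le (hP : IsCoherent E P r η)
    (hθ : IsLipschitzPartition E r K N θ) (hr : 0 < r) (hx : x ∈ E) (hy : dist y x < 3 * r)
    (hy' : dist y' x < 3 * r) :
    ‖(1 - P x) (y - planeOffset N θ P y - (y' - planeOffset N θ P y'))‖ ≤
      (1 + 19 * K) * η * ‖y - y'‖ := by
  have hη : 0 ≤ η := (norm_nonneg _).trans
    (hP.norm_sub_le x hx x hx (by rw [dist_self]; positivity))
  have hnear : ∀ j, dist y j < 12 * r ∨ dist y' j < 12 * r → dist x j < 15 * r := fun j hj => by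
    rcases hj with hj | hj
    · linarith [dist_triangle_left x j y]
    · linarith [dist_triangle_left x j y']
  have hsum := hθ.norm_sum_sub_sum_le (y := y) (y' := y')
    (u := fun j => (1 - P x) (j - x + P j (y - j)))
    (v := fun j => (1 - P x) (j - x + P j (y' - j))) (B := η * ‖y - y'‖) (by positivity)
    (by positivity : 0 ≤ 19 * η * r) (fun j hj hyj => ?_) fun j hj hyj =>
      hP.norm_one_sub_apply_add_le hr hx (hθ.subset hj) hy' (hnear j hyj)
  · rw [← sub_sub_sub_cancel_right _ _ x, map_sub,
      map_sub_planeOffset_sub _ (hθ.sum_eq_one y x hx (by linarith)),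
      map_sub_planeOffset_sub _ (hθ.sum_eq_one y' x hx (by linarith))]
    refine hsum.trans_eq ?_
    rw [dist_eq_norm]
    field_simp
  · rw [← map_sub, add_sub_add_left_eq_sub, ← map_sub, sub_sub_sub_cancel_right]
    exact hP.norm_one_sub_apply_apply_le hx (hθ.subset hj) (by linarith [hnear j (Or.inl hyj)]) _

end IsCoherent

end PlaneOffset

theorem exists_isNearPlane_image (X : Type*) [NormedAddCommGroup X] [NormedSpace ℝ X]
    [FiniteDimensional ℝ X] :
    ∃ a c : ℝ, 100 ≤ a ∧ 1 ≤ c ∧ ∀ (E : Set X) (P P' : X → X →L[ℝ] X) (r η : ℝ) (S : Set X),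
      Bornology.IsBounded E → 0 < r → 0 ≤ η → c * (a * η) ≤ 1 / 100 → IsCoherent E P r η →
      (∀ x ∈ E, IsBicontractiveProj (P' x)) → (∀ x ∈ E, ‖P x - P' x‖ ≤ η) →
      (∀ x ∈ E, IsNearPlane (P x) S x r (a * η)) →
      ∃ f, IsNearIdentity f (c * (a * η)) r ∧
        (∀ y ∈ S, (∀ x ∈ E, 12 * r ≤ dist y x) → f y = y) ∧
        ∀ x ∈ E, IsNearPlane (P' x) (f '' S) x (r / 10) (a * η) := by
  have : CompleteSpace X := FiniteDimensional.complete ℝ X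
  obtain ⟨K, hK0, hK⟩ := exists_isLipschitzPartition X
  obtain ⟨L, hL1, hL⟩ := exists_isNearIdentity_eqOn X
  refine ⟨210 + 38 * K, L * (2 + K), by linarith, by nlinarith, ?_⟩
  intro E P P' r η S hE hr hη hsmall hP hP' hPP' hS
  set A := (210 + 38 * K) * η
  have hA0 : 0 ≤ A := by positivity
  have hA100 : A ≤ 1 / 100 := (le_mul_of_one_le_left hA0 (by nlinarith)).trans hsmall
  have hKη : 0 ≤ K * η := by positivity
  obtain ⟨N, θ, hθ⟩ := hK E r hE hr
  obtain ⟨f, hf, hfS⟩ := hL S (fun y => -planeOffset N θ P y) r ((2 + K) * A) hr (by positivity)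
    (fun y hy y' hy' => by
      rw [← neg_sub', norm_neg]
      exact norm_planeOffset_sub_le hθ hr hA0 hK0 hS hy hy')
    fun y hy => by
      rw [norm_neg]
      refine (norm_planeOffset_le hθ hr hA0 hS hy).trans ?_
      gcongr
      exact le_mul_of_one_le_left hA0 (by linarith)
  simp only [← sub_eq_add_neg] at hfS
  rw [← mul_assoc] at hf
  refine ⟨f, hf, fun y hy hfar => ?_, fun x hx => ?_⟩
  · rw [hfS y hy, sub_eq_self]
    refine norm_le_zero_iff.1 (hθ.norm_sum_le le_rfl fun j hj hyj => ?_)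
    exact absurd hyj (hfar j (hθ.subset hj)).not_gt
  · refine (hS x hx).image (B := 19 * η) (D := (1 + 19 * K) * η) (hP.proj x hx) (hP' x hx) hf hr
      hA100 hsmall (hPP' x hx) (by linarith) (by linarith) (by positivity) (by linarith)
      (fun y hy => ?_) fun y hy y' hy' => ?_
    · rw [hfS y hy.1]
      exact hP.norm_one_sub_apply_sub_planeOffset_le hθ hr hx hy.2
    · rw [hfS y hy.1, hfS y' hy'.1]
      exact hP.norm_one_sub_apply_sub_planeOffset_sub_le hθ hr hx hy.2 hy'.2

end Step

section Iteration

/-- The composition `f (k - 1) ∘ ⋯ ∘ f 0` of the first `k` maps of a sequence. -/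
def stepComp {α : Type*} (f : ℕ → α → α) : ℕ → α → α
  | 0 => id
  | k + 1 => f k ∘ stepComp f k

theorem exists_forall_stepComp_image {α : Type*} {inv : ℕ → Set α → Prop}
    {Q : ℕ → (α → α) → Prop} {S : Set α} (h0 : inv 0 S)
    (hstep : ∀ k S, inv k S → ∃ f, Q k f ∧ inv (k + 1) (f '' S)) :
    ∃ f : ℕ → α → α, ∀ k, Q k (f k) ∧ inv k (stepComp f k '' S) := by
  choose F hF using hstep
  let T : ∀ k, {T : Set α // inv k T} :=
    Nat.rec ⟨S, h0⟩ fun k T => ⟨F k T.1 T.2 '' T.1, (hF k T.1 T.2).2⟩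
  let f : ℕ → α → α := fun k => F k (T k).1 (T k).2
  have hT : ∀ k, stepComp f k '' S = (T k).1 := fun k => by
    induction k with
    | zero => exact image_id S
    | succ k ih => rw [stepComp, image_comp, ih]
  exact ⟨f, fun k => ⟨(hF k (T k).1 (T k).2).1, hT k ▸ (T k).2⟩⟩

variable {X : Type*} [NormedAddCommGroup X] [NormedSpace ℝ X]

/-- At scale `r`, the set `S` is near the planes `x + range (P x)` for `x ∈ E`, with precision `A`,
and around each of its points it is a local graph over some projection in `𝒢`, with constant `B`. -/
structure IsFlatApprox (𝒢 : Set (X →L[ℝ] X)) (E : Set X) (P : X → X →L[ℝ] X) (r A B : ℝ)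
    (S : Set X) : Prop where
  near : ∀ x ∈ E, IsNearPlane (P x) S x r A
  flat : ∀ y ∈ S, ∃ p ∈ 𝒢, IsLocalGraph p S y (4 * r) (2 * r) B

theorem IsLocalGraph.mono {p : X →L[ℝ] X} {S : Set X} {x : X} {R ρ A A' : ℝ}
    (hG : IsLocalGraph p S x R ρ A) (hA : A ≤ A') : IsLocalGraph p S x R ρ A' where
  cone y hy y' hy' := (hG.cone y hy y' hy').trans (by gcongr)
  cover := hG.cover

theorem isLocalGraph_fixedPoints {p : X →L[ℝ] X} {y : X} {R ρ A : ℝ} (hA : 0 ≤ A) (hρ : ρ < R)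
    (hy : p y = y) : IsLocalGraph p {y | p y = y} y R ρ A where
  cone z hz z' hz' := by
    have hzero : (1 - p) (z - z') = 0 := by
      rw [sub_apply, one_apply_eq_self, map_sub, hz.1, hz'.1, sub_self]
    rw [hzero, norm_zero]
    positivity
  cover q hq hqρ := by
    refine ⟨y + q, ⟨?_, ?_⟩, by rw [add_sub_cancel_left, hq]⟩
    · rw [mem_ofPred_eq, map_add, hy, hq]
    · rw [mem_ball, dist_self_add_left]
      exact hqρ.trans_lt hρ

theorem isNearPlane_fixedPoints [CompleteSpace X] {p₀ p : X →L[ℝ] X} {x : X} {η A : ℝ}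
    (hp₀ : IsBicontractiveProj p₀) (hp : IsBicontractiveProj p) (hpp : ‖p₀ - p‖ ≤ 2 * η)
    (hηA : 100 * η ≤ A) (hA : A ≤ 1 / 100) (hx : ‖x‖ ≤ 1) (hpx : ‖(1 - p) (0 - x)‖ ≤ η) :
    IsNearPlane p {y | p₀ y = y} x 1 A := by
  have hη : 0 ≤ η := (norm_nonneg _).trans hpx
  have hfix : ∀ v, p₀ v = v → ‖(1 - p) v‖ ≤ 2 * η * ‖v‖ := fun v hv => by
    simpa [hv] using norm_one_sub_apply_le_add hpp v
  have hheight : ∀ y, p₀ y = y → ‖(1 - p) (y - x)‖ ≤ 2 * η * ‖y‖ + η := fun y hy => by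
    rw [← sub_add_sub_cancel y 0 x, map_add, sub_zero]
    exact norm_add_le_of_le (hfix y hy) hpx
  have hid : IsNearIdentity (id : X → X) 0 0 := ⟨by simp, by simp⟩
  have hgraph : IsLocalGraph p (id '' {y | p₀ y = y}) x (20 * 1) (19 * 1) A := by
    refine (isLocalGraph_fixedPoints (R := 41) (ρ := 40) le_rfl (by norm_num)
      (map_zero p₀)).image hp₀ hp hid (by norm_num) le_rfl hpp (by linarith) (by norm_num)
      (by rw [dist_zero_left]; linarith) (by rw [dist_zero_left]; linarith)
      (fun y hy y' hy' => ?_) fun y hy hpy => ?_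
    · refine (hfix _ (by rw [map_sub, id, id, hy.1, hy'.1])).trans ?_
      gcongr
      linarith
    · have hyη : η * ‖y‖ ≤ η * 41 := by gcongr; simpa using (mem_ball.1 hy.2).le
      rw [mem_ball_iff_norm]
      rw [id] at hpy ⊢
      linarith [norm_le_norm_apply_add_norm_one_sub_apply p (y - x), hheight y hy.1]
  rw [image_id] at hgraph
  refine ⟨hgraph, fun y hy => (hheight y hy.1).trans ?_⟩
  have hyη : η * ‖y‖ ≤ η * 41 := by
    gcongr
    linarith [norm_le_norm_sub_add y x, mem_ball_iff_norm.1 hy.2]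
  linarith

section Image

variable {𝒢 : Set (X →L[ℝ] X)} {E S : Set X} {P : X → X →L[ℝ] X} {r A B δ : ℝ} {f : X → X}

theorem IsFlatApprox.flat_image [CompleteSpace X] (h𝒢 : ∀ p ∈ 𝒢, IsBicontractiveProj p)
    (hP : ∀ x ∈ E, P x ∈ 𝒢) (hS : IsFlatApprox 𝒢 E P r A B S) (hf : IsNearIdentity f δ r)
    (hr : 0 < r) (hA0 : 0 ≤ A) (hA : A ≤ 1 / 100) (hδ : δ ≤ 1 / 100) (hAB : 2 * (A + δ) ≤ B)
    (hB : B < 1 / 2) (hfar : ∀ y ∈ S, (∀ x ∈ E, 12 * r ≤ dist y x) → f y = y) :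
    ∀ y ∈ f '' S, ∃ p ∈ 𝒢, IsLocalGraph p (f '' S) y (4 * (r / 10)) (2 * (r / 10)) B := by
  rintro _ ⟨y, hy, rfl⟩
  by_cases hyE : ∃ x ∈ E, dist y x < 16 * r
  · obtain ⟨x, hx, hyx⟩ := hyE
    have hpx := h𝒢 _ (hP x hx)
    have hG : IsLocalGraph (P x) S y (4 * r) (2 * r) A :=
      (hS.near x hx).recenter hpx ⟨hy, mem_ball.2 (by linarith)⟩ (by linarith) (by linarith)
        (by linarith) (by nlinarith)
    exact ⟨P x, hP x hx,
      (hG.image_flat hpx hf hr hA0 (by linarith) (by linarith) hy).mono hAB⟩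
  · push Not at hyE
    obtain ⟨p, hp, hG⟩ := hS.flat y hy
    refine ⟨p, hp, hG.image_of_eqOn_id (h𝒢 p hp) hf hr hB (by linarith) (fun z hz => ?_) hy⟩
    exact hfar z hz.1 fun x hx => by
      linarith [hyE x hx, dist_triangle_left y x z, mem_ball.1 hz.2]

end Image

/-- Planes `x + range (P k x)`, for `x ∈ E`, that are coherent at each of the scales `10⁻ᵏ` and vary
slowly from one scale to the next; the projections all belong to the class `𝒢`. -/
structure IsCoherentFamily (𝒢 : Set (X →L[ℝ] X)) (E : Set X) (P : ℕ → X → X →L[ℝ] X) (η : ℝ) :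
    Prop where
  mem : ∀ k, ∀ x ∈ E, P k x ∈ 𝒢
  coherent : ∀ k, IsCoherent E (P k) ((1 / 10) ^ k) η
  norm_sub_succ_le : ∀ k, ∀ x ∈ E, ‖P k x - P (k + 1) x‖ ≤ η

/-- A sequence of perturbations of the identity at the scales `10⁻ᵏ` whose successive compositions
move `S` towards `E`, while keeping it, at the current scale, a local graph over projections
in `𝒢`. -/
structure IsFlatteningSequence (𝒢 : Set (X →L[ℝ] X)) (E S : Set X) (δ : ℝ) (f : ℕ → X → X) :
    Prop where
  isNearIdentity : ∀ k, IsNearIdentity (f k) δ ((1 / 10) ^ k)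
  exists_dist_le : ∀ k, ∀ x ∈ E, ∃ y ∈ stepComp f k '' S, dist y x ≤ δ * (1 / 10) ^ k
  flat : ∀ k, ∀ y ∈ stepComp f k '' S, ∃ p ∈ 𝒢,
    IsLocalGraph p (stepComp f k '' S) y (4 * (1 / 10) ^ k) (2 * (1 / 10) ^ k) δ

theorem IsCoherentFamily.isFlatApprox_fixedPoints [CompleteSpace X] {𝒢 : Set (X →L[ℝ] X)}
    {E : Set X} {P : ℕ → X → X →L[ℝ] X} {p₀ : X →L[ℝ] X} {η A B : ℝ}
    (h𝒢 : ∀ p ∈ 𝒢, IsBicontractiveProj p) (hP : IsCoherentFamily 𝒢 E P η) (hE : E ⊆ ball 0 1)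
    (h0E : 0 ∈ E) (hp₀ : p₀ ∈ 𝒢) (hpp : ‖p₀ - P 0 0‖ ≤ η) (hηA : 100 * η ≤ A) (hA : A ≤ 1 / 100)
    (hB : 0 ≤ B) : IsFlatApprox 𝒢 E (P 0) 1 A B {y | p₀ y = y} where
  near x hx := by
    have hx1 : ‖x‖ ≤ 1 := (mem_ball_zero_iff.1 (hE hx)).le
    have hcoh := hP.coherent 0
    rw [pow_zero] at hcoh
    refine isNearPlane_fixedPoints (h𝒢 _ hp₀) (h𝒢 _ (hP.mem 0 x hx)) ?_ hηA hA hx1 ?_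
    · rw [two_mul]
      exact norm_sub_le_norm_sub_add_norm_sub _ (P 0 0) _ |>.trans
        (add_le_add hpp (hcoh.norm_sub_le 0 h0E x hx (by rw [dist_zero_left]; linarith)))
    · simpa using hcoh.height x hx 0 h0E (by rw [dist_zero_right]; linarith)
  flat y hy := ⟨p₀, hp₀, isLocalGraph_fixedPoints hB (by norm_num) hy⟩

theorem IsCoherentFamily.exists_isFlatteningSequence (X : Type*) [NormedAddCommGroup X]
    [NormedSpace ℝ X] [FiniteDimensional ℝ X] :
    ∃ K : ℝ, 1 ≤ K ∧ ∀ {𝒢 : Set (X →L[ℝ] X)} {E : Set X} {P : ℕ → X → X →L[ℝ] X}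
      {p₀ : X →L[ℝ] X} {η : ℝ}, (∀ p ∈ 𝒢, IsBicontractiveProj p) → IsCoherentFamily 𝒢 E P η →
      E ⊆ ball 0 1 → 0 ∈ E → p₀ ∈ 𝒢 → ‖p₀ - P 0 0‖ ≤ η → K * η ≤ 1 / 100 →
      ∃ f, IsFlatteningSequence 𝒢 E {y | p₀ y = y} (K * η) f := by
  have : CompleteSpace X := FiniteDimensional.complete ℝ X
  obtain ⟨a, c, ha, hc, hstep⟩ := exists_isNearPlane_image X
  refine ⟨4 * (c * a), by nlinarith, fun {𝒢 E P p₀ η} h𝒢 hP hE h0E hp₀ hpp hsmall => ?_⟩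
  have hη : 0 ≤ η := (norm_nonneg _).trans hpp
  set A := a * η
  have hA0 : 0 ≤ A := by positivity
  have hK : 4 * (c * a) * η = 4 * (c * A) := by ring
  rw [hK] at hsmall ⊢
  have hAδ : A ≤ c * A := le_mul_of_one_le_left hA0 hc
  have hinit : IsFlatApprox 𝒢 E (P 0) ((1 / 10) ^ 0) A (4 * (c * A)) {y | p₀ y = y} := by
    rw [pow_zero]
    exact hP.isFlatApprox_fixedPoints h𝒢 hE h0E hp₀ hpp (mul_le_mul_of_nonneg_right ha hη)
      (by linarith) (by linarith)
  have hsucc : ∀ k S, IsFlatApprox 𝒢 E (P k) ((1 / 10) ^ k) A (4 * (c * A)) S →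
      ∃ f, IsNearIdentity f (c * A) ((1 / 10) ^ k) ∧
        IsFlatApprox 𝒢 E (P (k + 1)) ((1 / 10) ^ (k + 1)) A (4 * (c * A)) (f '' S) :=
      fun k S hS => by
    have hr : (0 : ℝ) < (1 / 10) ^ k := by positivity
    obtain ⟨f, hf, hfar, hnear⟩ := hstep E (P k) (P (k + 1)) _ η S (isBounded_ball.subset hE) hr hη
      (by linarith) (hP.coherent k) (fun x hx => h𝒢 _ (hP.mem (k + 1) x hx))
      (hP.norm_sub_succ_le k) hS.near
    have hpow : (1 / 10 : ℝ) ^ (k + 1) = (1 / 10) ^ k / 10 := by rw [pow_succ]; ring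
    refine ⟨f, hf, ?_⟩
    rw [hpow]
    exact ⟨hnear, hS.flat_image h𝒢 (hP.mem k) hf hr hA0 (by linarith) (by linarith)
      (by linarith) (by linarith) hfar⟩
  obtain ⟨f, hf⟩ := exists_forall_stepComp_image hinit hsucc
  refine ⟨f, fun k => (hf k).1.mono (by positivity) (by linarith), fun k x hx => ?_,
    fun k => (hf k).2.flat⟩
  obtain ⟨y, hy, hpy⟩ := ((hf k).2.near x hx).cover 0 (map_zero _) (by simp)
  have hheight := ((hf k).2.near x hx).height y hy
  rw [sub_apply, hpy, sub_zero, one_apply_eq_self, ← dist_eq_norm] at hheight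
  exact ⟨y, hy.1, hheight.trans (by gcongr; linarith)⟩

end Iteration

section Limit

open Filter Topology

variable {X : Type*} [NormedAddCommGroup X] {f : ℕ → X → X} {δ : ℝ}

section StepComp

variable {r : ℕ → ℝ}

theorem pow_mul_dist_le_dist_stepComp (hf : ∀ k, IsNearIdentity (f k) δ (r k)) (hδ : δ ≤ 1) (k : ℕ)
    (x y : X) : (1 - δ) ^ k * dist x y ≤ dist (stepComp f k x) (stepComp f k y) := by
  induction k with
  | zero => rw [pow_zero, one_mul]; rfl
  | succ k ih =>
    rw [pow_succ', mul_assoc]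
    exact (mul_le_mul_of_nonneg_left ih (sub_nonneg.2 hδ)).trans ((hf k).le_dist_map _ _)

theorem dist_stepComp_le_pow_mul_dist (hf : ∀ k, IsNearIdentity (f k) δ (r k)) (hδ : 0 ≤ δ) (k : ℕ)
    (x y : X) : dist (stepComp f k x) (stepComp f k y) ≤ (1 + δ) ^ k * dist x y := by
  induction k with
  | zero => rw [pow_zero, one_mul]; rfl
  | succ k ih =>
    rw [pow_succ', mul_assoc]
    exact ((hf k).dist_map_le _ _).trans (mul_le_mul_of_nonneg_left ih (by positivity))

theorem continuous_stepComp (hf : ∀ k, IsNearIdentity (f k) δ (r k)) :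
    ∀ k, Continuous (stepComp f k)
  | 0 => continuous_id
  | k + 1 => (hf k).continuous.comp (continuous_stepComp hf k)

theorem surjective_stepComp [NormedSpace ℝ X] [CompleteSpace X] (hr : ∀ k, 0 < r k)
    (hf : ∀ k, IsNearIdentity (f k) δ (r k)) (hδ : δ < 1) :
    ∀ k, Function.Surjective (stepComp f k)
  | 0 => Function.surjective_id
  | k + 1 => ((hf k).surjective (hr k) hδ).comp (surjective_stepComp hr hf hδ k)

end StepComp

/-- The pointwise limit of the compositions `stepComp f k`; it is only meaningful where they
converge, since `limUnder` takes an arbitrary value elsewhere. -/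
def stepLimit (f : ℕ → X → X) (x : X) : X :=
  limUnder atTop fun k => stepComp f k x

theorem dist_stepLimit_stepComp_le [CompleteSpace X]
    (hf : ∀ k, IsNearIdentity (f k) δ ((1 / 10) ^ k)) (k : ℕ) (x : X) :
    dist (stepLimit f x) (stepComp f k x) ≤ 2 * δ * (1 / 10) ^ k := by
  have hstep : ∀ k, dist (stepComp f k x) (stepComp f (k + 1) x) ≤ δ * (1 / 10) ^ k := fun k => by
    rw [dist_comm]
    exact (hf k).dist_le _
  have hlim := (cauchySeq_of_le_geometric (1 / 10) δ (by norm_num) hstep).tendsto_limUnder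
  rw [dist_comm]
  refine (dist_le_of_le_geometric_of_tendsto (1 / 10) δ (by norm_num) hstep hlim k).trans ?_
  rw [div_le_iff₀ (by norm_num)]
  linarith [dist_nonneg.trans (hstep k)]

theorem dist_stepLimit_self_le [CompleteSpace X] (hf : ∀ k, IsNearIdentity (f k) δ ((1 / 10) ^ k))
    (x : X) : dist (stepLimit f x) x ≤ 2 * δ := by
  simpa [stepComp] using dist_stepLimit_stepComp_le hf 0 x

theorem tendsto_mul_pow_atTop_zero (c : ℝ) :
    Tendsto (fun k : ℕ => c * (1 / 10 : ℝ) ^ k) atTop (𝓝 0) := by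
  simpa using (tendsto_pow_atTop_nhds_zero_of_lt_one (r := (1 / 10 : ℝ)) (by norm_num)
    (by norm_num)).const_mul c

theorem continuous_stepLimit [CompleteSpace X] (hf : ∀ k, IsNearIdentity (f k) δ ((1 / 10) ^ k)) :
    Continuous (stepLimit f) := by
  have hunif : TendstoUniformly (stepComp f) (stepLimit f) atTop := by
    refine Metric.tendstoUniformly_iff.2 fun ε hε => ?_
    filter_upwards [(tendsto_mul_pow_atTop_zero (2 * δ)).eventually_lt_const hε] with k hk x
    exact (dist_stepLimit_stepComp_le hf k x).trans_lt hk
  exact hunif.continuous (Frequently.of_forall (continuous_stepComp hf))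

theorem isClosedMap_of_dist_self_le [ProperSpace X] {g : X → X} {C : ℝ} (hg : Continuous g)
    (hC : ∀ x, dist (g x) x ≤ C) : IsClosedMap g := by
  refine (isProperMap_iff_tendsto_cocompact.2 ⟨hg, ?_⟩).isClosedMap
  rw [← Metric.cobounded_eq_cocompact, ← tendsto_norm_atTop_iff_cobounded]
  refine tendsto_atTop_mono (fun x => ?_)
    (tendsto_atTop_add_const_right _ (-C) tendsto_norm_cobounded_atTop)
  have hdist := hC x
  rw [dist_comm, dist_eq_norm] at hdist
  linarith [norm_sub_norm_le x (g x)]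

theorem mem_image_stepLimit [ProperSpace X] (hf : ∀ k, IsNearIdentity (f k) δ ((1 / 10) ^ k))
    {S : Set X} (hS : IsClosed S) {x : X}
    (hx : ∀ k, ∃ y ∈ stepComp f k '' S, dist y x ≤ δ * (1 / 10) ^ k) : x ∈ stepLimit f '' S := by
  have hclosed : IsClosed (stepLimit f '' S) :=
    isClosedMap_of_dist_self_le (continuous_stepLimit hf) (dist_stepLimit_self_le hf) S hS
  refine hclosed.closure_subset (Metric.mem_closure_iff.2 fun ε hε => ?_)
  obtain ⟨k, hk⟩ := ((tendsto_mul_pow_atTop_zero (3 * δ)).eventually_lt_const hε).exists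
  obtain ⟨_, ⟨y, hy, rfl⟩, hyx⟩ := hx k
  refine ⟨stepLimit f y, mem_image_of_mem _ hy, lt_of_le_of_lt ?_ hk⟩
  rw [dist_comm]
  linarith [dist_triangle (stepLimit f y) (stepComp f k y) x, dist_stepLimit_stepComp_le hf k y]

theorem surjective_stepLimit [NormedSpace ℝ X] [ProperSpace X]
    (hf : ∀ k, IsNearIdentity (f k) δ ((1 / 10) ^ k)) (hδ : δ < 1) :
    Function.Surjective (stepLimit f) := fun x => by
  rw [← mem_range, ← image_univ]
  refine mem_image_stepLimit hf isClosed_univ fun k => ⟨x, ?_, ?_⟩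
  · rw [image_univ]
    exact surjective_stepComp (fun k => by positivity) hf hδ k x
  · rw [dist_self]
    exact mul_nonneg ((hf 0).nonneg (by positivity)) (by positivity)

section BiHolder

variable {τ : ℝ}

/-- `10⁻ᵏ` is a scale at which the images of two points at distance `D` are already separated. -/
theorem exists_pow_le_mul_of_rpow_le {D : ℝ} (hD0 : 0 < D) (hD1 : D ≤ 1) (hδ : δ ≤ 1 / 10)
    (hδ0 : 0 ≤ δ) (hτ : 0 ≤ τ) (hδτ : (1 / 9) ^ τ ≤ 1 - δ) :
    ∃ k : ℕ, (1 / 10) ^ k ≤ (1 - δ) ^ k * D ∧ 9 / 10 * D ^ τ ≤ (1 - δ) ^ k ∧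
      (1 + δ) ^ k * D ^ τ ≤ 11 / 10 := by
  obtain ⟨m, hm, hm'⟩ := exists_nat_pow_near_of_lt_one hD0 hD1 (by norm_num : (0 : ℝ) < 1 / 9)
    (by norm_num)
  have hDτ : D ^ τ ≤ (1 - δ) ^ m := calc
    D ^ τ ≤ ((1 / 9) ^ m) ^ τ := by gcongr
    _ = ((1 / 9) ^ τ) ^ m := (Real.rpow_pow_comm (by norm_num) τ m).symm
    _ ≤ (1 - δ) ^ m := by gcongr
  have hδ' : 9 / 10 ≤ 1 - δ := by linarith
  have hsq : ((1 + δ) * (1 - δ)) ^ m ≤ 1 :=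
    pow_le_one₀ (mul_nonneg (by linarith) (by linarith)) (by nlinarith)
  refine ⟨m + 1, ?_, ?_, ?_⟩
  · calc (1 / 10 : ℝ) ^ (m + 1) = (9 / 10) ^ (m + 1) * (1 / 9) ^ (m + 1) := by
          rw [← mul_pow]; norm_num
      _ ≤ (1 - δ) ^ (m + 1) * D := by gcongr
  · rw [pow_succ']
    gcongr
  · calc (1 + δ) ^ (m + 1) * D ^ τ ≤ (1 + δ) ^ (m + 1) * (1 - δ) ^ m := by gcongr
      _ = (1 + δ) * ((1 + δ) * (1 - δ)) ^ m := by rw [mul_pow]; ring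
      _ ≤ (1 + δ) * 1 := by gcongr
      _ ≤ 11 / 10 := by linarith

theorem biHolder_stepLimit [CompleteSpace X] (hf : ∀ k, IsNearIdentity (f k) δ ((1 / 10) ^ k))
    (hδ : δ ≤ 1 / 10) (hτ : 0 < τ) (hδτ : (1 / 9) ^ τ ≤ 1 - δ) {x y : X} (hxy : dist x y ≤ 1) :
    1 / 4 * dist x y ^ (1 + τ) ≤ dist (stepLimit f x) (stepLimit f y) ∧
      dist (stepLimit f x) (stepLimit f y) ≤ 3 * dist x y ^ (1 - τ) := by
  rcases eq_or_ne x y with rfl | hne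
  · rw [dist_self, dist_self, Real.zero_rpow (by linarith)]
    exact ⟨by norm_num, by positivity⟩
  have hδ0 : 0 ≤ δ := (hf 0).nonneg (by positivity)
  have hD0 : 0 < dist x y := dist_pos.2 hne
  obtain ⟨k, hk, hlow, hupp⟩ := exists_pow_le_mul_of_rpow_le hD0 hxy hδ hδ0 hτ.le hδτ
  have hak := pow_mul_dist_le_dist_stepComp hf (by linarith) k x y
  have hak' := dist_stepComp_le_pow_mul_dist hf hδ0 k x y
  set a := dist (stepComp f k x) (stepComp f k y)
  have herr : |dist (stepLimit f x) (stepLimit f y) - a| ≤ 2 / 5 * a := calc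
    _ ≤ 2 * δ * (1 / 10) ^ k + 2 * δ * (1 / 10) ^ k := (dist_dist_dist_le _ _ _ _).trans
      (add_le_add (dist_stepLimit_stepComp_le hf k x) (dist_stepLimit_stepComp_le hf k y))
    _ = 4 * δ * (1 / 10) ^ k := by ring
    _ ≤ 2 / 5 * a := mul_le_mul (by linarith) (hk.trans hak) (by positivity) (by norm_num)
  obtain ⟨herr₁, herr₂⟩ := abs_le.1 herr
  constructor
  · calc 1 / 4 * dist x y ^ (1 + τ) = 1 / 4 * (dist x y ^ τ * dist x y) := by
          rw [add_comm, Real.rpow_add_one hD0.ne']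
      _ ≤ 3 / 5 * (9 / 10 * dist x y ^ τ * dist x y) := by
          linarith [show 0 ≤ dist x y ^ τ * dist x y by positivity]
      _ ≤ 3 / 5 * a := by grw [hlow, hak]
      _ ≤ _ := by linarith
  · calc dist (stepLimit f x) (stepLimit f y) ≤ 7 / 5 * a := by linarith
      _ ≤ 7 / 5 * (11 / 10 / dist x y ^ τ * dist x y) := by
          grw [hak', (le_div_iff₀ (by positivity)).2 hupp]
      _ = 77 / 50 * (dist x y / dist x y ^ τ) := by ring
      _ ≤ 3 * dist x y ^ (1 - τ) := by
          rw [Real.rpow_sub hD0, Real.rpow_one]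
          gcongr
          norm_num

theorem injective_stepLimit [CompleteSpace X] (hf : ∀ k, IsNearIdentity (f k) δ ((1 / 10) ^ k))
    (hδ : δ ≤ 1 / 10) (hτ : 0 < τ) (hδτ : (1 / 9) ^ τ ≤ 1 - δ) :
    Function.Injective (stepLimit f) := fun x y hxy => by
  have hclose : dist x y ≤ 1 := by
    have hx := dist_stepLimit_self_le hf x
    rw [hxy] at hx
    linarith [dist_triangle_left x y (stepLimit f y), dist_stepLimit_self_le hf y]
  have hpow := (biHolder_stepLimit hf hδ hτ hδτ hclose).1
  rw [hxy, dist_self] at hpow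
  by_contra hne
  linarith [Real.rpow_pos_of_pos (dist_pos.2 hne) (1 + τ)]

end BiHolder

end Limit

section StarProjection

variable {X : Type*} [NormedAddCommGroup X] [InnerProductSpace ℝ X]

theorem isBicontractiveProj_starProjection (W : Submodule ℝ X) [W.HasOrthogonalProjection] :
    IsBicontractiveProj W.starProjection where
  isIdempotentElem := W.isIdempotentElem_starProjection
  norm_le_one := W.starProjection_norm_le
  norm_one_sub_le_one := by
    rw [← W.starProjection_orthogonal']
    exact Wᗮ.starProjection_norm_le

theorem infDist_affineSubspace (Q : AffineSubspace ℝ X) [Q.direction.HasOrthogonalProjection]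
    {x : X} (hx : x ∈ Q) (z : X) :
    infDist z Q = ‖(1 - Q.direction.starProjection) (z - x)‖ := by
  have : Nonempty Q := ⟨⟨x, hx⟩⟩
  rw [← EuclideanGeometry.dist_orthogonalProjection_eq_infDist,
    EuclideanGeometry.orthogonalProjection_apply_mem Q hx, dist_eq_norm, vsub_eq_sub, vadd_eq_add,
    Submodule.coe_orthogonalProjectionOnto_apply, sub_apply, one_apply_eq_self, sub_sub, add_comm x]

theorem setOf_starProjection_direction_eq_self (Q : AffineSubspace ℝ X)
    [Q.direction.HasOrthogonalProjection] (h0 : 0 ∈ Q) :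
    {y | Q.direction.starProjection y = y} = (Q : Set X) := by
  ext y
  rw [mem_ofPred_eq, Submodule.starProjection_eq_self_iff, SetLike.mem_coe,
    ← Q.vsub_right_mem_direction_iff_mem h0 y, vsub_eq_sub, sub_zero]

theorem norm_one_sub_mul_starProjection_le {Q Q' : AffineSubspace ℝ X}
    [Q.direction.HasOrthogonalProjection] [Q'.direction.HasOrthogonalProjection] {c x x' : X}
    {R ε : ℝ} (hR : 0 < R) (hε : 0 ≤ ε) (hx : x ∈ Q) (hx' : x' ∈ Q') (hc : dist x' c ≤ R / 2)
    (hdist : ∀ y ∈ Q', dist y c < R → infDist y Q ≤ ε * R) :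
    ‖(1 - Q.direction.starProjection) * Q'.direction.starProjection‖ ≤ 8 * ε := by
  refine ContinuousLinearMap.opNorm_le_of_shell (half_pos hR) (by positivity) (c := (2 : ℝ))
    (by norm_num) fun v hv hvR => ?_
  rw [Real.norm_ofNat] at hv
  set w := Q'.direction.starProjection v
  have hw : ‖w‖ < R / 2 := (Submodule.norm_starProjection_apply_le _ v).trans_lt hvR
  have hxw : w + x' ∈ Q' :=
    AffineSubspace.vadd_mem_of_mem_direction (Submodule.starProjection_apply_mem _ v) hx'
  have hheight := hdist x' hx' (by linarith)
  have hxwx' : dist (w + x') x' = ‖w‖ := dist_vadd_left w x'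
  have hheight' := hdist _ hxw (by linarith [dist_triangle (w + x') x' c])
  rw [infDist_affineSubspace Q hx] at hheight hheight'
  calc ‖(1 - Q.direction.starProjection) w‖
      = ‖(1 - Q.direction.starProjection) (w + x' - x) -
          (1 - Q.direction.starProjection) (x' - x)‖ := by
        rw [← map_sub, sub_sub_sub_cancel_right, add_sub_cancel_right]
    _ ≤ ε * R + ε * R := norm_sub_le_of_le hheight' hheight
    _ ≤ 8 * ε * ‖v‖ := by nlinarith

end StarProjection

theorem norm_sub_le_of_isSelfAdjoint {A : Type*} [NormedRing A] [StarRing A] [NormedStarGroup A]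
    {p q : A} (hp : IsSelfAdjoint p) (hq : IsSelfAdjoint q) :
    ‖p - q‖ ≤ ‖(1 - q) * p‖ + ‖(1 - p) * q‖ := by
  have hstar : star ((1 - p) * q) = q * (1 - p) := by
    rw [star_mul, star_sub, star_one, hp.star_eq, hq.star_eq]
  rw [← norm_star ((1 - p) * q), hstar]
  calc ‖p - q‖ = ‖(1 - q) * p - q * (1 - p)‖ := by congr 1; noncomm_ring
    _ ≤ ‖(1 - q) * p‖ + ‖q * (1 - p)‖ := norm_sub_le _ _

section LocalHausdorff

variable {n : ℕ} {x : V n} {r ε : ℝ} {A B : Set (V n)}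

theorem nhd_comm (x : V n) (r : ℝ) (A B : Set (V n)) : nhd x r A B = nhd x r B A := by
  rw [nhd, nhd, max_comm]

theorem infDist_le_of_nhd_le (hr : 0 < r) (hB : B.Nonempty) (h : nhd x r A B ≤ ε) {y : V n}
    (hy : y ∈ A) (hyx : dist y x < r) : infDist y B ≤ ε * r := by
  rw [nhd, inv_mul_le_iff₀' hr] at h
  obtain ⟨b, hb⟩ := hB
  have hbdd : BddAbove (⋃ z, range fun _ : z ∈ A ∩ ball x r => infDist z B) := by
    refine ⟨r + dist x b, ?_⟩
    rintro _ ⟨_, ⟨z, rfl⟩, hz, rfl⟩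
    exact (infDist_le_dist_of_mem hb).trans <| (dist_triangle z x b).trans <| by
      linarith [mem_ball.1 hz.2]
  exact (le_ciSup₂ hbdd y ⟨hy, hyx⟩).trans ((le_max_left _ _).trans h)

theorem nhd_le (hr : 0 < r) (hε : 0 ≤ ε) (hA : ∀ y ∈ A, dist y x < r → infDist y B ≤ ε * r)
    (hB : ∀ y ∈ B, dist y x < r → infDist y A ≤ ε * r) : nhd x r A B ≤ ε := by
  rw [nhd, inv_mul_le_iff₀' hr]
  have h0 : 0 ≤ ε * r := by positivity
  exact max_le (Real.iSup_le (fun y => Real.iSup_le (fun hy => hA y hy.1 hy.2) h0) h0)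
    (Real.iSup_le (fun y => Real.iSup_le (fun hy => hB y hy.1 hy.2) h0) h0)

theorem norm_starProjection_sub_le_of_nhd_le {Q Q' : AffineSubspace ℝ (V n)} {x' : V n}
    (hr : 0 < r) (hε : 0 ≤ ε) (hx : x ∈ Q) (hx' : x' ∈ Q') (hxx' : dist x' x ≤ r / 2)
    (h : nhd x r Q Q' ≤ ε) :
    ‖Q.direction.starProjection - Q'.direction.starProjection‖ ≤ 16 * ε := by
  have hQ := norm_one_sub_mul_starProjection_le hr hε hx' hx (by rw [dist_self]; positivity)
    fun y hy hyx => infDist_le_of_nhd_le hr ⟨x', hx'⟩ h hy hyx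
  rw [nhd_comm] at h
  have hQ' := norm_one_sub_mul_starProjection_le hr hε hx hx' hxx'
    fun y hy hyx => infDist_le_of_nhd_le hr ⟨x, hx⟩ h hy hyx
  linarith [norm_sub_le_of_isSelfAdjoint (A := V n →L[ℝ] V n)
    (isSelfAdjoint_starProjection Q.direction) (isSelfAdjoint_starProjection Q'.direction)]

end LocalHausdorff

/-- The orthogonal projections of `ℝⁿ` onto its linear subspaces of dimension `d`. -/
def planeProjections (n d : ℕ) : Set (V n →L[ℝ] V n) :=
  {p | ∃ W : Submodule ℝ (V n), Module.finrank ℝ W = d ∧ W.starProjection = p}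

theorem isBicontractiveProj_of_mem_planeProjections {n d : ℕ} {p : V n →L[ℝ] V n}
    (hp : p ∈ planeProjections n d) : IsBicontractiveProj p := by
  obtain ⟨W, -, rfl⟩ := hp
  exact isBicontractiveProj_starProjection W

section Assembly

variable {n d : ℕ}

theorem IsLocalGraph.exists_isAffinePlane_nhd_le {W : Submodule ℝ (V n)}
    (hW : Module.finrank ℝ W = d)
    {f g : V n → V n} {S : Set (V n)} {δ r s : ℝ} (hδ0 : 0 ≤ δ) (hδ : δ ≤ 1 / 100) (hr : 0 < r)
    (hrs : r ≤ s) (hsr : s ≤ 10 * r) (hfg : ∀ z, dist (g z) (f z) ≤ 2 * δ * s) {z₀ : V n}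
    (hz₀ : z₀ ∈ S) (hflat : IsLocalGraph W.starProjection (f '' S) (f z₀) (4 * s) (2 * s) δ) :
    ∃ Q : Set (V n), IsAffinePlane n d Q ∧ g z₀ ∈ Q ∧ nhd (g z₀) r (g '' S) Q ≤ 80 * δ := by
  have hs : 0 < s := hr.trans_le hrs
  have hδs : δ * s ≤ δ * (10 * r) := by gcongr
  have hδs' : 4 * (δ * s) ≤ s := by nlinarith
  have hclose : ∀ z, ‖(g z - g z₀) - (f z - f z₀)‖ ≤ 4 * (δ * s) := fun z => by
    rw [sub_sub_sub_comm]
    have hnorm : ∀ w, ‖g w - f w‖ ≤ 2 * δ * s := fun w => dist_eq_norm (g w) _ ▸ hfg w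
    linarith [norm_sub_le_of_le (hnorm z) (hnorm z₀)]
  have hcone : ∀ z ∈ S, f z ∈ ball (f z₀) (4 * s) →
      ‖(1 - W.starProjection) (f z - f z₀)‖ ≤ 4 * (δ * s) := fun z hz hzs => by
    refine (hflat.cone _ ⟨mem_image_of_mem f hz, hzs⟩ _
      ⟨mem_image_of_mem f hz₀, mem_ball_self (by positivity)⟩).trans ?_
    nlinarith [mem_ball_iff_norm.1 hzs]
  obtain ⟨Q, rfl, hgQ⟩ : ∃ Q : AffineSubspace ℝ (V n), Q.direction = W ∧ g z₀ ∈ Q :=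
    ⟨.mk' (g z₀) W, AffineSubspace.direction_mk' _ _, AffineSubspace.self_mem_mk' _ _⟩
  refine ⟨Q, ⟨Q, rfl, hW, ⟨_, hgQ⟩⟩, hgQ, nhd_le hr (by positivity) ?_ ?_⟩
  · rintro _ ⟨z, hz, rfl⟩ hzr
    have hzs : f z ∈ ball (f z₀) (4 * s) := by
      rw [dist_eq_norm] at hzr
      rw [mem_ball_iff_norm]
      linarith [norm_le_norm_add_norm_sub (g z - g z₀) (f z - f z₀), hclose z]
    rw [infDist_affineSubspace Q hgQ]
    calc ‖(1 - Q.direction.starProjection) (g z - g z₀)‖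
        ≤ 4 * (δ * s) + 4 * (δ * s) := by
          rw [← sub_add_cancel (g z - g z₀) (f z - f z₀), map_add]
          exact norm_add_le_of_le (((isBicontractiveProj_starProjection _).norm_one_sub_apply_le
            _).trans (hclose z)) (hcone z hz hzs)
      _ ≤ 80 * δ * r := by linarith
  · rintro w hw hwr
    obtain ⟨_, ⟨⟨z, hz, rfl⟩, hzs⟩, hpz⟩ := hflat.cover (w - g z₀)
      (Submodule.starProjection_eq_self_iff.2 (Q.vsub_mem_direction hw hgQ))
      (by rw [← dist_eq_norm]; linarith)
    refine (infDist_le_dist_of_mem (mem_image_of_mem g hz)).trans ?_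
    have hheight := hcone z hz hzs
    rw [sub_apply, one_apply_eq_self, hpz] at hheight
    calc dist w (g z) = ‖((g z - g z₀) - (f z - f z₀)) + ((f z - f z₀) - (w - g z₀))‖ := by
          rw [sub_add_sub_cancel, sub_sub_sub_cancel_right, dist_comm, dist_eq_norm]
      _ ≤ 4 * (δ * s) + 4 * (δ * s) := norm_add_le_of_le (hclose z) hheight
      _ ≤ 80 * δ * r := by linarith

theorem isCoherentFamily_of_nhd_le {E : Set (V n)} {Q : ℕ → V n → AffineSubspace ℝ (V n)} {ε : ℝ}
    (hε : 0 ≤ ε) (hQ : ∀ k, ∀ x ∈ E, x ∈ Q k x ∧ Module.finrank ℝ (Q k x).direction = d)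
    (hscale : ∀ k, ∀ x ∈ E, nhd x ((1 / 10) ^ (k + 1)) (Q (k + 1) x) (Q k x) ≤ ε)
    (hcoh : ∀ k, ∀ x ∈ E, ∀ y ∈ E, dist x y ≤ 100 * (1 / 10) ^ k →
      nhd x (100 * (1 / 10) ^ k) (Q k x) (Q k y) ≤ ε) :
    IsCoherentFamily (planeProjections n d) E
      (fun k x => (Q k x).direction.starProjection) (100 * ε) where
  mem k x hx := ⟨_, (hQ k x hx).2, rfl⟩
  coherent k :=
    { proj := fun x _ => isBicontractiveProj_starProjection _
      norm_sub_le := fun x hx y hy hxy => by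
        have hpow : (0 : ℝ) < (1 / 10) ^ k := by positivity
        exact (norm_starProjection_sub_le_of_nhd_le (r := 100 * (1 / 10) ^ k) (by positivity) hε
          (hQ k x hx).1 (hQ k y hy).1 (by rw [dist_comm]; linarith)
          (hcoh k x hx y hy (by linarith))).trans (by linarith)
      height := fun x hx y hy hxy => by
        have hpow : (0 : ℝ) < (1 / 10) ^ k := by positivity
        have hdist := infDist_le_of_nhd_le (by positivity) ⟨x, (hQ k x hx).1⟩
          (nhd_comm x _ _ _ ▸ hcoh k x hx y hy (by linarith)) (hQ k y hy).1
          (by rw [dist_comm]; linarith)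
        rw [infDist_affineSubspace _ (hQ k x hx).1] at hdist
        linarith }
  norm_sub_succ_le k x hx := by
    rw [norm_sub_rev]
    exact (norm_starProjection_sub_le_of_nhd_le (by positivity) hε (hQ _ x hx).1 (hQ _ x hx).1
      (by rw [dist_self]; positivity) (hscale k x hx)).trans (by linarith)

theorem IsFlatteningSequence.exists_isAffinePlane_nhd_le {E : Set (V n)} {p : V n →L[ℝ] V n}
    {f : ℕ → V n → V n} {δ : ℝ} (hp : p ∈ planeProjections n d)
    (hf : IsFlatteningSequence (planeProjections n d) E {y | p y = y} δ f)
    (hδ0 : 0 ≤ δ) (hδ : δ ≤ 1 / 100) {x : V n} (hx : x ∈ stepLimit f '' {y | p y = y}) {r : ℝ}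
    (hr : 0 < r) :
    ∃ Q : Set (V n), IsAffinePlane n d Q ∧ x ∈ Q ∧
      nhd x r (stepLimit f '' {y | p y = y}) Q ≤ 80 * δ := by
  obtain ⟨z, hz, rfl⟩ := hx
  obtain hr1 | hr1 := le_or_gt 1 r
  · obtain ⟨W, hW, rfl⟩ := hp
    refine IsLocalGraph.exists_isAffinePlane_nhd_le (f := id) (s := r)
      hW hδ0 hδ hr le_rfl (by linarith) (fun w => ?_) hz ?_
    · refine (dist_stepLimit_self_le hf.isNearIdentity w).trans ?_
      exact le_mul_of_one_le_right (by positivity) hr1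
    · rw [image_id]
      exact isLocalGraph_fixedPoints hδ0 (by linarith) hz
  · obtain ⟨k, hkr, hrk⟩ := exists_nat_pow_near_of_lt_one hr hr1.le
      (by norm_num : (0 : ℝ) < 1 / 10) (by norm_num)
    obtain ⟨_, ⟨W, hW, rfl⟩, hgraph⟩ := hf.flat k _ (mem_image_of_mem _ hz)
    refine IsLocalGraph.exists_isAffinePlane_nhd_le hW hδ0 hδ hr hrk ?_
      (dist_stepLimit_stepComp_le hf.isNearIdentity k) hz hgraph
    rw [pow_succ] at hkr
    linarith

theorem exists_pos_le_one_sub_rpow {τ : ℝ} (hτ : 0 < τ) :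
    ∃ δ : ℝ, 0 < δ ∧ δ ≤ 1 / 100 ∧ 2 * δ ≤ τ ∧ (1 / 9 : ℝ) ^ τ ≤ 1 - δ := by
  have hlt : (1 / 9 : ℝ) ^ τ < 1 := Real.rpow_lt_one (by norm_num) (by norm_num) hτ
  obtain ⟨δ, hδ0, hδ⟩ := exists_between
    (lt_min (lt_min (by norm_num) (half_pos hτ)) (sub_pos.2 hlt) :
      (0 : ℝ) < min (min (1 / 100) (τ / 2)) (1 - (1 / 9 : ℝ) ^ τ))
  rw [lt_min_iff, lt_min_iff] at hδ
  exact ⟨δ, hδ0, hδ.1.1.le, by linarith, by linarith⟩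

theorem exists_isCoherentFamily_of_nhd_le {E : Set (V n)} {P : V n → ℝ → Set (V n)} {ε : ℝ}
    (hε : 0 ≤ ε) (h0E : 0 ∈ E)
    (hP : ∀ x ∈ E, ∀ r : ℝ, 0 < r → r ≤ 10 → IsAffinePlane n d (P x r) ∧ x ∈ P x r)
    (hscale : ∀ x ∈ E, ∀ k : ℕ, nhd x ((10 : ℝ) ^ (-(k : ℤ)))
      (P x ((10 : ℝ) ^ (-(k : ℤ)))) (P x ((10 : ℝ) ^ (1 - (k : ℤ)))) ≤ ε)
    (hcoh : ∀ k : ℕ, ∀ x ∈ E, ∀ y ∈ E, dist x y ≤ (10 : ℝ) ^ (2 - (k : ℤ)) →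
      nhd x ((10 : ℝ) ^ (2 - (k : ℤ)))
        (P x ((10 : ℝ) ^ (-(k : ℤ)))) (P y ((10 : ℝ) ^ (-(k : ℤ)))) ≤ ε) :
    ∃ p₀ ∈ planeProjections n d, {y | p₀ y = y} = P 0 10 ∧
      ∃ p, IsCoherentFamily (planeProjections n d) E p (100 * ε) ∧ ‖p₀ - p 0 0‖ ≤ 100 * ε := by
  have hpow : ∀ k : ℕ, (10 : ℝ) ^ (-(k : ℤ)) = (1 / 10) ^ k := fun k => by
    rw [zpow_neg, zpow_natCast, one_div, inv_pow]
  have hpow1 : ∀ k : ℕ, (10 : ℝ) ^ (1 - ((k + 1 : ℕ) : ℤ)) = (1 / 10) ^ k := fun k => by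
    rw [← hpow, Nat.cast_succ, sub_add_cancel_right]
  have hpow2 : ∀ k : ℕ, (10 : ℝ) ^ (2 - (k : ℤ)) = 100 * (1 / 10) ^ k := fun k => by
    rw [sub_eq_add_neg, zpow_add₀ (by norm_num), hpow]
    norm_num
  have hpow10 : ∀ k : ℕ, (1 / 10 : ℝ) ^ k ≤ 10 := fun k =>
    (pow_le_one₀ (by norm_num) (by norm_num)).trans (by norm_num)
  choose! Q hQP hdim _ using fun x hx r hr hr' => (hP x hx r hr hr').1
  have hmem : ∀ x ∈ E, ∀ r : ℝ, 0 < r → r ≤ 10 → x ∈ Q x r := fun x hx r hr hr' => by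
    rw [← SetLike.mem_coe, hQP x hx r hr hr']
    exact (hP x hx r hr hr').2
  have hQPk : ∀ k : ℕ, ∀ x ∈ E, (Q x ((1 / 10) ^ k) : Set (V n)) = P x ((1 / 10) ^ k) :=
    fun k x hx => hQP x hx _ (by positivity) (hpow10 k)
  have hQP0 := hQP 0 h0E 10 (by norm_num) le_rfl
  have h0Q := hmem 0 h0E 10 (by norm_num) le_rfl
  refine ⟨_, ⟨_, hdim 0 h0E 10 (by norm_num) le_rfl, rfl⟩,
    (setOf_starProjection_direction_eq_self _ h0Q).trans hQP0, _,
    isCoherentFamily_of_nhd_le (Q := fun k x => Q x ((1 / 10) ^ k)) hε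
      (fun k x hx => ⟨hmem x hx _ (by positivity) (hpow10 k),
        hdim x hx _ (by positivity) (hpow10 k)⟩)
      (fun k x hx => ?_) fun k x hx y hy hxy => ?_, ?_⟩
  · rw [hQPk _ x hx, hQPk _ x hx, ← hpow1 k, ← hpow (k + 1)]
    exact hscale x hx (k + 1)
  · rw [hQPk _ x hx, hQPk _ y hy, ← hpow2, ← hpow]
    exact hcoh k x hx y hy (by rwa [hpow2])
  · have h0 := hscale 0 h0E 0
    rw [hpow, Nat.cast_zero, sub_zero, zpow_one, ← hQP0, ← hQPk 0 0 h0E] at h0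
    rw [norm_sub_rev]
    exact (norm_starProjection_sub_le_of_nhd_le (by positivity) hε
      (hmem 0 h0E _ (by positivity) (hpow10 0)) h0Q (by rw [dist_self]; positivity) h0).trans
      (by linarith)

end Assembly

theorem thm_1_10_general (n d : ℕ) :
    ∃ C : ℝ, 0 < C ∧
    ∀ τ : ℝ, 0 < τ →
    ∃ ε₀ : ℝ, 0 < ε₀ ∧ ∀ ε : ℝ, 0 ≤ ε → ε ≤ ε₀ →
      ∀ E : Set (V n), E ⊆ ball (0 : V n) 1 → (0 : V n) ∈ E →
      ∀ P : V n → ℝ → Set (V n),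
      (∀ x ∈ E, ∀ r : ℝ, 0 < r → r ≤ 10 → IsAffinePlane n d (P x r) ∧ x ∈ P x r) →
      (∀ x ∈ E, ∀ k : ℕ,
        nhd x ((10 : ℝ) ^ (-(k : ℤ)))
          (P x ((10 : ℝ) ^ (-(k : ℤ)))) (P x ((10 : ℝ) ^ (1 - (k : ℤ)))) ≤ ε) →
      (∀ k : ℕ, ∀ x ∈ E, ∀ y ∈ E, dist x y ≤ (10 : ℝ) ^ (2 - (k : ℤ)) →
        nhd x ((10 : ℝ) ^ (2 - (k : ℤ)))
          (P x ((10 : ℝ) ^ (-(k : ℤ)))) (P y ((10 : ℝ) ^ (-(k : ℤ)))) ≤ ε) →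
      ∃ g : V n → V n, Function.Bijective g ∧
        (∀ x : V n, dist (g x) x ≤ τ) ∧
        (∀ x y : V n, dist x y ≤ 1 →
          (1 / 4 : ℝ) * dist x y ^ (1 + τ) ≤ dist (g x) (g y) ∧
          dist (g x) (g y) ≤ 3 * dist x y ^ (1 - τ)) ∧
        E ⊆ g '' (P 0 10) ∧
        (∀ x ∈ g '' (P 0 10), ∀ r : ℝ, 0 < r →
          ∃ Q : Set (V n), IsAffinePlane n d Q ∧ x ∈ Q ∧
            nhd x r (g '' (P 0 10)) Q ≤ C * ε) := by
  obtain ⟨K, hK1, hK⟩ := IsCoherentFamily.exists_isFlatteningSequence (V n)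
  refine ⟨8000 * K, by positivity, fun τ hτ => ?_⟩
  obtain ⟨δ₀, hδ₀, hδ₀100, hδ₀τ, hδ₀9⟩ := exists_pos_le_one_sub_rpow hτ
  refine ⟨δ₀ / (100 * K), by positivity, fun ε hε hεδ₀ E hE h0E P hP hscale hcoh => ?_⟩
  obtain ⟨p₀, hp₀, hPp₀, p, hp, hp₀p⟩ := exists_isCoherentFamily_of_nhd_le hε h0E hP hscale hcoh
  obtain ⟨δ, hδ⟩ : ∃ δ, K * (100 * ε) = δ := ⟨_, rfl⟩
  have hδ0 : 0 ≤ δ := hδ ▸ by positivity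
  have hδδ₀ : δ ≤ δ₀ := by
    rw [le_div_iff₀ (by positivity)] at hεδ₀
    linarith
  obtain ⟨f, hf⟩ := hK (fun _ => isBicontractiveProj_of_mem_planeProjections) hp hE h0E hp₀ hp₀p
    (by linarith)
  rw [hδ] at hf
  have hnear := hf.isNearIdentity
  have hδτ : (1 / 9 : ℝ) ^ τ ≤ 1 - δ := by linarith
  rw [← hPp₀, show 8000 * K * ε = 80 * δ by rw [← hδ]; ring]
  exact ⟨stepLimit f,
    ⟨injective_stepLimit hnear (by linarith) hτ hδτ, surjective_stepLimit hnear (by linarith)⟩,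
    fun x => (dist_stepLimit_self_le hnear x).trans (by linarith),
    fun x y => biHolder_stepLimit hnear (by linarith) hτ hδτ,
    fun x hx => mem_image_stepLimit hnear (isClosed_eq p₀.continuous continuous_id) fun k =>
      hf.exists_dist_le k x hx,
    fun x hx r hr => hf.exists_isAffinePlane_nhd_le hp₀ hδ0 (by linarith) hx hr⟩

/-- **Theorem 1.10**: Reifenberg parameterizations for sets with holes.
The constant `C` depends only on `n` and `d`; `ε` depends only on `n`, `d`, `τ`. -/
theorem thm_1_10 (n d : ℕ) (hd : 0 < d) (hdn : d < n) :
    ∃ C : ℝ, 0 < C ∧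
    ∀ τ : ℝ, 0 < τ → τ < 10⁻¹ →
    ∃ ε : ℝ, 0 < ε ∧
      ∀ E : Set (V n), IsClosed E → E ⊆ ball (0 : V n) 1 → (0 : V n) ∈ E →
      ∀ P : V n → ℝ → Set (V n),
      -- for each `x ∈ E` and `0 < r ≤ 10`, `P x r` is a `d`-plane through `x`
      -- close to `E` in `B(x,r)`
      (∀ x ∈ E, ∀ r : ℝ, 0 < r → r ≤ 10 →
        IsAffinePlane n d (P x r) ∧ x ∈ P x r ∧
        ∀ y ∈ E ∩ ball x r, infDist y (P x r) ≤ ε * r) →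
      -- coherence condition (1.8)
      (∀ x ∈ E, ∀ k : ℕ,
        nhd x ((10 : ℝ) ^ (-(k : ℤ)))
          (P x ((10 : ℝ) ^ (-(k : ℤ)))) (P x ((10 : ℝ) ^ (1 - (k : ℤ)))) ≤ ε) →
      -- coherence condition (1.9)
      (∀ k : ℕ, ∀ x ∈ E, ∀ y ∈ E, dist x y ≤ (10 : ℝ) ^ (2 - (k : ℤ)) →
        nhd x ((10 : ℝ) ^ (2 - (k : ℤ)))
          (P x ((10 : ℝ) ^ (-(k : ℤ)))) (P y ((10 : ℝ) ^ (-(k : ℤ)))) ≤ ε) →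
      ∃ g : V n → V n, Function.Bijective g ∧
        (∀ x : V n, dist (g x) x ≤ τ) ∧
        (∀ x y : V n, dist x y ≤ 1 →
          (1 / 4 : ℝ) * dist x y ^ (1 + τ) ≤ dist (g x) (g y) ∧
          dist (g x) (g y) ≤ 3 * dist x y ^ (1 - τ)) ∧
        E ⊆ g '' (P 0 10) ∧
        -- `Σ = g(P(0,10))` is `Cε`-Reifenberg-flat
        (∀ x ∈ g '' (P 0 10), ∀ r : ℝ, 0 < r →
          ∃ Q : Set (V n), IsAffinePlane n d Q ∧ x ∈ Q ∧
            nhd x r (g '' (P 0 10)) Q ≤ C * ε) := by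
  obtain ⟨C, hC, hgen⟩ := thm_1_10_general n d
  refine ⟨C, hC, fun τ hτ _ => ?_⟩
  obtain ⟨ε, hε, h⟩ := hgen τ hτ
  exact ⟨ε, hε, fun E _ hE h0E P hP => h ε hε.le le_rfl E hE h0E P fun x hx r hr hr' =>
    ⟨(hP x hx r hr hr').1, (hP x hx r hr hr').2.1⟩⟩
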